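/- arXiv:2108.08675 — 2 statements merged into one kernel-verified Lean document; each statement's English description precedes it below -/
import Mathlib

section
/- Let u be the uniform probability measure on the d-dimensional torus T^d. Then for every positive smooth function f on T^d: Ent_u(f) ≤ (1/(8π²)) ∫_{T^d} (|∇f|²/f) du. -/
open MeasureTheory Real Set

noncomputable section

/-!
On the circle, let `u` evolve by the heat equation. The entropy of `u` decreases at rate
`I = ∫ u'² / u`, and two integrations by parts show that `I` itself decreases at rate at least
`8 ∫ (√u)''²`. Wirtinger's inequality for the mean-zero function `(√u)'` bounds this below by
`8π² I`, so `Ent u - I / (8π²)` increases along the flow. Since the entropy tends to `0` as `u`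
converges to its mean, this quantity is at most `0` at time `0`. For a trigonometric polynomial the
flow is explicit, and a general density is a `C¹` limit of such polynomials.

The torus follows by tensorization. The entropy of a product measure is the mean entropy of the
slices plus the entropy of the marginal, and the Fisher information of the marginal is controlled
by joint convexity of `(f, g) ↦ g² / f`.
-/

open Filter Topology Function

section EntropyAndFisherInformation

variable {α β : Type*} [MeasurableSpace α] [MeasurableSpace β] {μ : Measure α} {ν : Measure β}

/-- The entropy `Ent_μ(f) = ∫ f log f dμ - (∫ f dμ) log (∫ f dμ)` of a density `f`. -/
def entropy (μ : Measure α) (f : α → ℝ) : ℝ :=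
  (∫ x, f x * log (f x) ∂μ) - (∫ x, f x ∂μ) * log (∫ x, f x ∂μ)

/-- The Fisher information `∫ f'² / f dμ` of a density `f` along a direction in which its
derivative is `f'`; the derivative is an independent argument. -/
def fisherInformation (μ : Measure α) (f f' : α → ℝ) : ℝ :=
  ∫ x, f' x ^ 2 / f x ∂μ

lemma integral_pos_of_forall_pos [NeZero μ] {f : α → ℝ} (hf : Integrable f μ)
    (hpos : ∀ x, 0 < f x) : 0 < ∫ x, f x ∂μ := by
  rw [integral_pos_iff_support_of_nonneg (fun x => (hpos x).le) hf,
    support_eq_univ fun x => (hpos x).ne']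
  exact NeZero.pos _

lemma fisherInformation_nonneg {f : α → ℝ} (hf : ∀ x, 0 ≤ f x) (f' : α → ℝ) :
    0 ≤ fisherInformation μ f f' :=
  integral_nonneg fun x => div_nonneg (sq_nonneg _) (hf x)

lemma entropy_const [IsProbabilityMeasure μ] (M : ℝ) : entropy μ (fun _ => M) = 0 := by
  simp [entropy]

lemma entropy_map_equiv (e : α ≃ᵐ β) (f : β → ℝ) :
    entropy (μ.map e) f = entropy μ fun x => f (e x) := by
  simp only [entropy, integral_map_equiv]

lemma fisherInformation_map_equiv (e : α ≃ᵐ β) (f f' : β → ℝ) :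
    fisherInformation (μ.map e) f f' =
      fisherInformation μ (fun x => f (e x)) fun x => f' (e x) := by
  simp only [fisherInformation, integral_map_equiv]

lemma tendsto_entropy [IsFiniteMeasure μ] {ι : Type*} {l : Filter ι} [l.IsCountablyGenerated]
    {F : ι → α → ℝ} {f : α → ℝ} {B : ℝ} (hmeas : ∀ᶠ i in l, AEStronglyMeasurable (F i) μ)
    (hbound : ∀ᶠ i in l, ∀ x, |F i x| ≤ B) (hlim : ∀ x, Tendsto (F · x) l (𝓝 (f x))) :
    Tendsto (fun i => entropy μ (F i)) l (𝓝 (entropy μ f)) := by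
  obtain ⟨C, hC⟩ := (isCompact_Icc (a := -B) (b := B)).exists_bound_of_continuousOn
    continuous_mul_log.continuousOn
  have mean_tendsto : Tendsto (fun i => ∫ x, F i x ∂μ) l (𝓝 (∫ x, f x ∂μ)) :=
    tendsto_integral_filter_of_dominated_convergence (fun _ => B) hmeas
      (hbound.mono fun i hi => ae_of_all _ hi) (integrable_const B) (ae_of_all _ hlim)
  refine Tendsto.sub ?_ ((continuous_mul_log.tendsto _).comp mean_tendsto)
  exact tendsto_integral_filter_of_dominated_convergence (fun _ => C)
    (hmeas.mono fun i hi => continuous_mul_log.comp_aestronglyMeasurable hi)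
    (hbound.mono fun i hi => ae_of_all _ fun x => hC _ (abs_le.1 (hi x))) (integrable_const C)
    (ae_of_all _ fun x => (continuous_mul_log.tendsto _).comp (hlim x))

lemma tendsto_fisherInformation [IsFiniteMeasure μ] {ι : Type*} {l : Filter ι}
    [l.IsCountablyGenerated] {F F' : ι → α → ℝ} {f f' : α → ℝ} {m B : ℝ} (hm : 0 < m)
    (hmeas : ∀ᶠ i in l, AEStronglyMeasurable (F i) μ)
    (hmeas' : ∀ᶠ i in l, AEStronglyMeasurable (F' i) μ) (hlow : ∀ᶠ i in l, ∀ x, m ≤ F i x)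
    (hbound : ∀ᶠ i in l, ∀ x, |F' i x| ≤ B) (hf : ∀ x, f x ≠ 0)
    (hlim : ∀ x, Tendsto (F · x) l (𝓝 (f x))) (hlim' : ∀ x, Tendsto (F' · x) l (𝓝 (f' x))) :
    Tendsto (fun i => fisherInformation μ (F i) (F' i)) l (𝓝 (fisherInformation μ f f')) := by
  refine tendsto_integral_filter_of_dominated_convergence (fun _ => B ^ 2 / m) ?_ ?_
    (integrable_const _) (ae_of_all _ fun x => ((hlim' x).pow 2).div (hlim x) (hf x))
  · filter_upwards [hmeas, hmeas'] with i hi hi'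
    exact (hi'.aemeasurable.pow_const 2 |>.div hi.aemeasurable).aestronglyMeasurable
  · filter_upwards [hlow, hbound] with i hi hi'
    refine ae_of_all _ fun x => ?_
    have hpos : 0 < F i x := hm.trans_le (hi x)
    rw [norm_of_nonneg (by positivity), ← sq_abs]
    gcongr
    exacts [hi' x, hi x]

lemma entropy_prod [SFinite μ] [SFinite ν] {f : α × β → ℝ} (hf : Integrable f (μ.prod ν))
    (hlog : Integrable (fun z => f z * log (f z)) (μ.prod ν))
    (hmarginal : Integrable (fun y => (∫ x, f (x, y) ∂μ) * log (∫ x, f (x, y) ∂μ)) ν) :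
    entropy (μ.prod ν) f =
      (∫ y, entropy μ (fun x => f (x, y)) ∂ν) + entropy ν fun y => ∫ x, f (x, y) ∂μ := by
  simp only [entropy]
  rw [integral_sub hlog.integral_prod_right hmarginal, integral_prod_symm _ hf,
    integral_prod_symm _ hlog]
  ring

lemma integral_entropy_slice_le [SFinite μ] [SFinite ν] {f g : α × β → ℝ} {C : ℝ}
    (hlog : Integrable (fun z => f z * log (f z)) (μ.prod ν))
    (hmarginal : Integrable (fun y => (∫ x, f (x, y) ∂μ) * log (∫ x, f (x, y) ∂μ)) ν)
    (hgf : Integrable (fun z => g z ^ 2 / f z) (μ.prod ν))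
    (hslice : ∀ y, entropy μ (fun x => f (x, y)) ≤
      C * fisherInformation μ (fun x => f (x, y)) fun x => g (x, y)) :
    ∫ y, entropy μ (fun x => f (x, y)) ∂ν ≤ C * fisherInformation (μ.prod ν) f g := by
  rw [fisherInformation, integral_prod_symm _ hgf, ← integral_const_mul]
  exact integral_mono (hlog.integral_prod_right.sub hmarginal)
    (hgf.integral_prod_right.const_mul C) hslice

/-- The tangent `2 l g - l² f ≤ g² / f` to the jointly convex function `(f, g) ↦ g² / f` is
integrated at the slope `l = ∫ g / ∫ f`. -/
lemma sq_integral_div_le_integral_sq_div {f g : α → ℝ} (hpos : ∀ x, 0 < f x)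
    (hf : Integrable f μ) (hg : Integrable g μ) (hgf : Integrable (fun x => g x ^ 2 / f x) μ) :
    (∫ x, g x ∂μ) ^ 2 / ∫ x, f x ∂μ ≤ ∫ x, g x ^ 2 / f x ∂μ := by
  set l := (∫ x, g x ∂μ) / ∫ x, f x ∂μ with hl
  have tangent (x : α) : 2 * l * g x - l ^ 2 * f x ≤ g x ^ 2 / f x := by
    rw [le_div_iff₀ (hpos x)]
    nlinarith [sq_nonneg (g x - l * f x)]
  calc (∫ x, g x ∂μ) ^ 2 / ∫ x, f x ∂μ
      = 2 * l * (∫ x, g x ∂μ) - l ^ 2 * ∫ x, f x ∂μ := by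
        rcases eq_or_ne (∫ x, f x ∂μ) 0 with h0 | h0
        · simp [hl, h0]
        · rw [hl]
          field_simp
          ring
    _ = ∫ x, (2 * l * g x - l ^ 2 * f x) ∂μ := by
        rw [integral_sub (hg.const_mul _) (hf.const_mul _), integral_const_mul,
          integral_const_mul]
    _ ≤ ∫ x, g x ^ 2 / f x ∂μ :=
        integral_mono ((hg.const_mul _).sub (hf.const_mul _)) hgf tangent

lemma fisherInformation_marginal_le [SFinite μ] [SFinite ν] {f g : α × β → ℝ}
    (hpos : ∀ z, 0 < f z) (hf : ∀ y, Integrable (fun x => f (x, y)) μ)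
    (hg : ∀ y, Integrable (fun x => g (x, y)) μ)
    (hslice : ∀ y, Integrable (fun x => g (x, y) ^ 2 / f (x, y)) μ)
    (hgf : Integrable (fun z => g z ^ 2 / f z) (μ.prod ν)) :
    fisherInformation ν (fun y => ∫ x, f (x, y) ∂μ) (fun y => ∫ x, g (x, y) ∂μ) ≤
      fisherInformation (μ.prod ν) f g := by
  rw [fisherInformation, fisherInformation, integral_prod_symm _ hgf]
  refine integral_mono_of_nonneg (ae_of_all _ fun y => ?_) hgf.integral_prod_right
    (ae_of_all _ fun y => sq_integral_div_le_integral_sq_div (fun x => hpos (x, y))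
      (hf y) (hg y) (hslice y))
  exact div_nonneg (sq_nonneg _) (integral_nonneg fun x => (hpos (x, y)).le)

end EntropyAndFisherInformation

section Wirtinger

lemma norm_fourierCoeffOn_of_hasDerivAt {a b : ℝ} (hab : a < b) {q q' : ℝ → ℂ} {n : ℤ}
    (hn : n ≠ 0) (hq : ∀ x ∈ uIcc a b, HasDerivAt q (q' x) x)
    (hq' : IntervalIntegrable q' volume a b) (hper : q b = q a) :
    ‖fourierCoeffOn hab q' n‖ = 2 * π / (b - a) * |(n : ℝ)| * ‖fourierCoeffOn hab q n‖ := by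
  have hba : 0 < b - a := sub_pos.2 hab
  have : 0 < |(n : ℝ)| := abs_pos.2 (Int.cast_ne_zero.2 hn)
  rw [fourierCoeffOn_of_hasDerivAt hab hn hq hq', hper, sub_self, mul_zero, zero_sub,
    ← Complex.ofReal_sub]
  simp only [norm_mul, norm_neg, norm_div, norm_one, Complex.norm_ofNat, Complex.norm_real,
    Complex.norm_I, Complex.norm_intCast, norm_eq_abs, abs_of_pos pi_pos, abs_of_pos hba, mul_one]
  field_simp

theorem wirtinger_inequality {a b : ℝ} (hab : a < b) {q q' : ℝ → ℂ}
    (hq : ∀ x ∈ uIcc a b, HasDerivAt q (q' x) x) (hq' : MemLp q' 2 (volume.restrict (Ioc a b)))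
    (hper : q b = q a) (hmean : ∫ x in a..b, q x = 0) :
    (2 * π / (b - a)) ^ 2 * ∫ x in a..b, ‖q x‖ ^ 2 ≤ ∫ x in a..b, ‖q' x‖ ^ 2 := by
  have hba : 0 < b - a := sub_pos.2 hab
  have hq'_int : IntervalIntegrable q' volume a b :=
    (intervalIntegrable_iff_integrableOn_Ioc_of_le hab.le).2 (hq'.integrable one_le_two)
  have hq_cont : ContinuousOn q (Icc a b) := fun x hx =>
    (hq x (Icc_subset_uIcc hx)).continuousAt.continuousWithinAt
  obtain ⟨C, hC⟩ := isCompact_Icc.exists_bound_of_continuousOn hq_cont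
  have hq_memLp : MemLp q 2 (volume.restrict (Ioc a b)) :=
    MemLp.of_bound ((hq_cont.mono Ioc_subset_Icc_self).aestronglyMeasurable measurableSet_Ioc) C
      ((ae_restrict_mem measurableSet_Ioc).mono fun x hx => hC x (Ioc_subset_Icc_self hx))
  have parseval := hasSum_sq_fourierCoeffOn hab hq_memLp
  have parseval' := hasSum_sq_fourierCoeffOn hab hq'
  have coeff_le (n : ℤ) : (2 * π / (b - a)) ^ 2 * ‖fourierCoeffOn hab q n‖ ^ 2 ≤
      ‖fourierCoeffOn hab q' n‖ ^ 2 := by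
    rcases eq_or_ne n 0 with rfl | hn
    · have coeff_zero : fourierCoeffOn hab q 0 = 0 := by
        simp [fourierCoeffOn_eq_integral, hmean]
      simp [coeff_zero]
    · have one_le : (1 : ℝ) ≤ |(n : ℝ)| := mod_cast Int.one_le_abs hn
      rw [norm_fourierCoeffOn_of_hasDerivAt hab hn hq hq'_int hper, ← mul_pow]
      gcongr
      exact le_mul_of_one_le_right (by positivity) one_le
  have := hasSum_le coeff_le (parseval.mul_left _) parseval'
  rw [smul_eq_mul, smul_eq_mul, mul_left_comm] at this
  exact le_of_mul_le_mul_left this (inv_pos.2 hba)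

end Wirtinger

section HeatDissipation

variable {v v₁ v₂ v₃ : ℝ → ℝ} {a b : ℝ}

lemma continuous_of_hasDerivAt {f f' : ℝ → ℝ} (hf : ∀ x, HasDerivAt f (f' x) x) : Continuous f :=
  continuous_iff_continuousAt.2 fun x => (hf x).continuousAt

lemma integral_eq_zero_of_hasDerivAt {f f' : ℝ → ℝ} (hf : ∀ x, HasDerivAt f (f' x) x)
    (hf' : Continuous f') (hper : f b = f a) : ∫ x in a..b, f' x = 0 := by
  rw [intervalIntegral.integral_eq_sub_of_hasDerivAt (fun x _ => hf x)
    (hf'.intervalIntegrable _ _), hper, sub_self]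

lemma integral_log_add_one_mul_deriv₂ (hpos : ∀ x, 0 < v x) (h₀ : ∀ x, HasDerivAt v (v₁ x) x)
    (h₁ : ∀ x, HasDerivAt v₁ (v₂ x) x) (hv₂ : Continuous v₂) (per₀ : v b = v a)
    (per₁ : v₁ b = v₁ a) :
    ∫ x in a..b, (log (v x) + 1) * v₂ x = -∫ x in a..b, v₁ x ^ 2 / v x := by
  have cont₀ := continuous_of_hasDerivAt h₀
  have cont₁ := continuous_of_hasDerivAt h₁
  have hlog (x : ℝ) : HasDerivAt (fun x => log (v x) + 1) (v₁ x / v x) x :=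
    ((h₀ x).log (hpos x).ne').add_const 1
  rw [intervalIntegral.integral_mul_deriv_eq_deriv_mul (fun x _ => hlog x) (fun x _ => h₁ x)
    ((cont₁.div cont₀ fun x => (hpos x).ne').intervalIntegrable _ _)
    (hv₂.intervalIntegrable _ _), per₀, per₁, sub_self, zero_sub]
  congr 2 with x
  ring

/-- `v₂ - v₁² / (2v)` is `2√v (√v)''`, so the square on the right is `8 ∫ (√v)''²`. -/
lemma integral_heat_deriv_fisherInformation_le (hab : a ≤ b) (hpos : ∀ x, 0 < v x)
    (h₀ : ∀ x, HasDerivAt v (v₁ x) x) (h₁ : ∀ x, HasDerivAt v₁ (v₂ x) x)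
    (h₂ : ∀ x, HasDerivAt v₂ (v₃ x) x) (hv₃ : Continuous v₃) (per₀ : v b = v a)
    (per₁ : v₁ b = v₁ a) (per₂ : v₂ b = v₂ a) :
    ∫ x in a..b, (2 * v₁ x * v₃ x / v x - v₁ x ^ 2 * v₂ x / v x ^ 2) ≤
      -2 * ∫ x in a..b, (v₂ x - v₁ x ^ 2 / (2 * v x)) ^ 2 / v x := by
  have cont₀ := continuous_of_hasDerivAt h₀
  have cont₁ := continuous_of_hasDerivAt h₁
  have cont₂ := continuous_of_hasDerivAt h₂
  have hne (x : ℝ) : v x ≠ 0 := (hpos x).ne'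
  have hne₂ (x : ℝ) : 2 * v x ≠ 0 := mul_ne_zero two_ne_zero (hne x)
  have hne_sq (x : ℝ) : v x ^ 2 ≠ 0 := pow_ne_zero 2 (hne x)
  let G' (x : ℝ) : ℝ := 2 * v₁ x * v₃ x / v x - v₁ x ^ 2 * v₂ x / v x ^ 2 +
    2 * ((v₂ x - v₁ x ^ 2 / (2 * v x)) ^ 2 / v x) + v₁ x ^ 4 / (6 * v x * v x ^ 2)
  have hG (x : ℝ) :
      HasDerivAt (fun x => 2 * (v₁ x * v₂ x / v x) - 1 / 3 * (v₁ x ^ 3 / v x ^ 2)) (G' x) x := by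
    have hfst := (((h₁ x).fun_mul (h₂ x)).fun_div (h₀ x) (hne x)).const_mul 2
    have hsnd := (((h₁ x).fun_pow 3).fun_div ((h₀ x).fun_pow 2) (hne_sq x)).const_mul (1 / 3)
    refine (hfst.sub hsnd).congr_deriv ?_
    have := hne x
    simp only [G']
    push_cast
    field_simp
    ring
  have hne₃ (x : ℝ) : 6 * v x * v x ^ 2 ≠ 0 := by have := hne x; positivity
  have hG'_int : ∫ x in a..b, G' x = 0 :=
    integral_eq_zero_of_hasDerivAt hG (by simp only [G']; fun_prop (disch := assumption))
      (by simp only [per₀, per₁, per₂])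
  have int_sq : IntervalIntegrable (fun x => (v₂ x - v₁ x ^ 2 / (2 * v x)) ^ 2 / v x) volume a b :=
    (by fun_prop (disch := assumption) : Continuous _).intervalIntegrable _ _
  have int_deriv : IntervalIntegrable
      (fun x => 2 * v₁ x * v₃ x / v x - v₁ x ^ 2 * v₂ x / v x ^ 2) volume a b :=
    (by fun_prop (disch := assumption) : Continuous _).intervalIntegrable _ _
  have int_quartic : IntervalIntegrable (fun x => v₁ x ^ 4 / (6 * v x * v x ^ 2)) volume a b :=
    (by fun_prop (disch := assumption) : Continuous _).intervalIntegrable _ _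
  have quartic_nonneg : 0 ≤ ∫ x in a..b, v₁ x ^ 4 / (6 * v x * v x ^ 2) :=
    intervalIntegral.integral_nonneg hab fun x _ => by have := hpos x; positivity
  rw [intervalIntegral.integral_add (int_deriv.add (int_sq.const_mul 2)) int_quartic,
    intervalIntegral.integral_add int_deriv (int_sq.const_mul 2),
    intervalIntegral.integral_const_mul] at hG'_int
  linarith

/-- Wirtinger's inequality for `v₁ / √v = 2(√v)'`. -/
lemma wirtinger_deriv_sqrt (hab : a < b) (hpos : ∀ x, 0 < v x)
    (h₀ : ∀ x, HasDerivAt v (v₁ x) x) (h₁ : ∀ x, HasDerivAt v₁ (v₂ x) x) (hv₂ : Continuous v₂)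
    (per₀ : v b = v a) (per₁ : v₁ b = v₁ a) :
    (2 * π / (b - a)) ^ 2 * ∫ x in a..b, v₁ x ^ 2 / v x ≤
      ∫ x in a..b, (v₂ x - v₁ x ^ 2 / (2 * v x)) ^ 2 / v x := by
  have cont₀ := continuous_of_hasDerivAt h₀
  have cont₁ := continuous_of_hasDerivAt h₁
  have hne (x : ℝ) : v x ≠ 0 := (hpos x).ne'
  have hne₂ (x : ℝ) : 2 * v x ≠ 0 := mul_ne_zero two_ne_zero (hne x)
  have hsqrt (x : ℝ) : √(v x) ≠ 0 := (sqrt_pos.2 (hpos x)).ne'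
  let q (x : ℝ) : ℝ := v₁ x / √(v x)
  let q' (x : ℝ) : ℝ := (v₂ x - v₁ x ^ 2 / (2 * v x)) / √(v x)
  have hq (x : ℝ) : HasDerivAt q (q' x) x := by
    refine ((h₁ x).fun_div ((h₀ x).sqrt (hne x)) (hsqrt x)).congr_deriv ?_
    have := hsqrt x
    simp only [q']
    rw [← sq_sqrt (hpos x).le, sqrt_sq (sqrt_nonneg _)]
    field_simp
  have cont_q' : Continuous q' := by
    simp only [q']
    fun_prop (disch := assumption)
  have q_mean : ∫ x in a..b, q x = 0 := by
    refine integral_eq_zero_of_hasDerivAt (f := fun x => 2 * √(v x)) (fun x => ?_)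
      (continuous_of_hasDerivAt hq) (by rw [per₀])
    refine (((h₀ x).sqrt (hne x)).const_mul 2).congr_deriv ?_
    simp only [q]
    field_simp
  have memLp_q' : MemLp (fun x => (q' x : ℂ)) 2 (volume.restrict (Ioc a b)) := by
    have cont : Continuous fun x => (q' x : ℂ) := by fun_prop
    obtain ⟨C, hC⟩ := isCompact_Icc.exists_bound_of_continuousOn (cont.continuousOn (s := Icc a b))
    exact MemLp.of_bound cont.aestronglyMeasurable C
      ((ae_restrict_mem measurableSet_Ioc).mono fun x hx => hC x (Ioc_subset_Icc_self hx))
  have := wirtinger_inequality hab (fun x _ => (hq x).ofReal_comp) memLp_q'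
    (by simp only [q, per₀, per₁]) (by rw [intervalIntegral.integral_ofReal, q_mean]; simp)
  simpa only [Complex.norm_real, norm_eq_abs, sq_abs, q, q', div_pow, sq_sqrt (hpos _).le]
    using this

/-- The integrand is the time derivative of `v log v - v₁² / (8π² v)` along the heat equation,
which replaces `∂ₜv` by `v₂` and `∂ₜv₁` by `v₃`. -/
lemma integral_heat_deriv_entropy_sub_fisherInformation_nonneg (hpos : ∀ x, 0 < v x)
    (h₀ : ∀ x, HasDerivAt v (v₁ x) x) (h₁ : ∀ x, HasDerivAt v₁ (v₂ x) x)
    (h₂ : ∀ x, HasDerivAt v₂ (v₃ x) x) (hv₃ : Continuous v₃) (per₀ : v 1 = v 0)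
    (per₁ : v₁ 1 = v₁ 0) (per₂ : v₂ 1 = v₂ 0) :
    0 ≤ (∫ x in (0 : ℝ)..1, (log (v x) + 1) * v₂ x) - 1 / (8 * π ^ 2) *
      ∫ x in (0 : ℝ)..1, (2 * v₁ x * v₃ x / v x - v₁ x ^ 2 * v₂ x / v x ^ 2) := by
  have hv₂ := continuous_of_hasDerivAt h₂
  have dissipation := integral_heat_deriv_fisherInformation_le zero_le_one hpos h₀ h₁ h₂ hv₃
    per₀ per₁ per₂
  have wirtinger := wirtinger_deriv_sqrt zero_lt_one hpos h₀ h₁ hv₂ per₀ per₁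
  rw [sub_zero, div_one] at wirtinger
  rw [integral_log_add_one_mul_deriv₂ hpos h₀ h₁ hv₂ per₀ per₁]
  set fisher := ∫ x in (0 : ℝ)..1, v₁ x ^ 2 / v x
  have : 1 / (8 * π ^ 2) * (-2 * ((2 * π) ^ 2 * fisher)) = -fisher := by
    field_simp
    ring
  have key := mul_le_mul_of_nonneg_left (dissipation.trans
    (mul_le_mul_of_nonpos_left wirtinger (by norm_num))) (by positivity : 0 ≤ 1 / (8 * π ^ 2))
  linarith

end HeatDissipation

section CompactParametricIntegral

variable {X E : Type*} [TopologicalSpace X] [MeasurableSpace X] [OpensMeasurableSpace X]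
  [NormedAddCommGroup E] [NormedSpace ℝ E] {μ : Measure X} [IsFiniteMeasureOnCompacts μ]

lemma hasDerivAt_setIntegral_of_isCompact {K : Set X} (hK : IsCompact K)
    (hK_meas : MeasurableSet K) {S : Set ℝ} {t : ℝ} (hS : S ∈ 𝓝 t) {k k' : ℝ → X → E}
    (hk : ∀ s ∈ S, ContinuousOn (k s) K) (hk' : ContinuousOn (uncurry k') (S ×ˢ K))
    (hderiv : ∀ s ∈ S, ∀ x ∈ K, HasDerivAt (k · x) (k' s x) s) :
    HasDerivAt (fun s => ∫ x in K, k s x ∂μ) (∫ x in K, k' t x ∂μ) t := by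
  obtain ⟨J, hJ, hJS, hJ_compact⟩ := local_compact_nhds hS
  obtain ⟨C, hC⟩ := (hJ_compact.prod hK).exists_bound_of_continuousOn
    (hk'.mono (prod_mono_left hJS))
  have hk'_slice : ContinuousOn (k' t) K :=
    hk'.comp (f := fun x => (t, x)) (by fun_prop) fun x hx => ⟨mem_of_mem_nhds hS, hx⟩
  refine (hasDerivAt_integral_of_dominated_loc_of_deriv_le (bound := fun _ => C) hJ
    (eventually_of_mem hS fun s hs => (hk s hs).aestronglyMeasurable_of_isCompact hK hK_meas)
    ((hk t (mem_of_mem_nhds hS)).integrableOn_of_subset_isCompact hK hK_meas subset_rfl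
      hK.measure_ne_top)
    (hk'_slice.aestronglyMeasurable_of_isCompact hK hK_meas) ?_
    (integrableOn_const hK.measure_ne_top) ?_).2
  · exact (ae_restrict_mem hK_meas).mono fun x hx s hs => hC (s, x) ⟨hs, hx⟩
  · exact (ae_restrict_mem hK_meas).mono fun x hx s hs => hderiv s (hJS hs) x hx

end CompactParametricIntegral

section UnitInterval

/-- Lebesgue measure on `[0, 1]`, the uniform measure of the circle `ℝ / ℤ`. -/
abbrev unitMeasure : Measure ℝ :=
  volume.restrict (Icc 0 1)

instance : IsProbabilityMeasure unitMeasure :=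
  ⟨by simp⟩

lemma integral_unitMeasure {E : Type*} [NormedAddCommGroup E] [NormedSpace ℝ E] (f : ℝ → E) :
    ∫ x, f x ∂unitMeasure = ∫ x in (0 : ℝ)..1, f x := by
  rw [integral_Icc_eq_integral_Ioc, intervalIntegral.integral_of_le zero_le_one]

end UnitInterval

section HeatFlow

/-- A `1`-periodic solution of the heat equation `∂ₜu = ∂ₓ²u`, together with its space
derivatives: `u k t x` stands for `∂ₓᵏu` at time `t` and position `x`. -/
structure IsPeriodicHeatFlow (u : ℕ → ℝ → ℝ → ℝ) : Prop where
  continuous : ∀ k, Continuous (uncurry (u k))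
  hasDerivAt_space : ∀ k t x, HasDerivAt (u k t) (u (k + 1) t x) x
  hasDerivAt_time : ∀ k t x, HasDerivAt (fun s => u k s x) (u (k + 2) t x) t
  periodic : ∀ t, Periodic (u 0 t) 1

lemma periodic_of_hasDerivAt {f f' : ℝ → ℝ} {c : ℝ} (hf : ∀ x, HasDerivAt f (f' x) x)
    (hper : Periodic f c) : Periodic f' c := fun x => by
  have shifted := (hf (x + c)).comp_add_const x c
  simp only [hper _] at shifted
  exact shifted.unique (hf x)

namespace IsPeriodicHeatFlow

variable {u : ℕ → ℝ → ℝ → ℝ} (hu : IsPeriodicHeatFlow u)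

include hu

lemma periodic_space (k : ℕ) (t : ℝ) : Periodic (u k t) 1 := by
  induction k with
  | zero => exact hu.periodic t
  | succ k ih => exact periodic_of_hasDerivAt (hu.hasDerivAt_space k t) ih

lemma apply_one (k : ℕ) (t : ℝ) : u k t 1 = u k t 0 := by
  simpa using hu.periodic_space k t 0

lemma continuous_slice (k : ℕ) (t : ℝ) : Continuous (u k t) :=
  continuous_of_hasDerivAt (hu.hasDerivAt_space k t)

lemma hasDerivAt_mean (t : ℝ) : HasDerivAt (fun s => ∫ x, u 0 s x ∂unitMeasure) 0 t := by
  have mean_deriv : ∫ x, u 2 t x ∂unitMeasure = 0 := by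
    rw [integral_unitMeasure]
    exact integral_eq_zero_of_hasDerivAt (hu.hasDerivAt_space 1 t) (hu.continuous_slice 2 t)
      (hu.apply_one 1 t)
  rw [← mean_deriv]
  exact hasDerivAt_setIntegral_of_isCompact isCompact_Icc measurableSet_Icc univ_mem
    (fun s _ => (hu.continuous_slice 0 s).continuousOn) (hu.continuous 2).continuousOn
    fun s _ x _ => hu.hasDerivAt_time 0 s x

lemma mean_eq (s t : ℝ) : ∫ x, u 0 s x ∂unitMeasure = ∫ x, u 0 t x ∂unitMeasure :=
  is_const_of_deriv_eq_zero (fun t => (hu.hasDerivAt_mean t).differentiableAt)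
    (fun t => (hu.hasDerivAt_mean t).deriv) s t

lemma eventually_pos {t : ℝ} (hpos : ∀ x, 0 < u 0 t x) :
    ∀ᶠ s in 𝓝 t, ∀ x ∈ Icc (0 : ℝ) 1, 0 < u 0 s x :=
  isCompact_Icc.eventually_forall_of_forall_eventually fun x _ =>
    (hu.continuous 0).continuousAt.eventually_const_lt (hpos x)

lemma hasDerivAt_entropy {t : ℝ} (hpos : ∀ x, 0 < u 0 t x) :
    HasDerivAt (fun s => entropy unitMeasure (u 0 s))
      (∫ x, (log (u 0 t x) + 1) * u 2 t x ∂unitMeasure) t := by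
  have hcont := hu.continuous
  have hentropy (s : ℝ) : entropy unitMeasure (u 0 s) = (∫ x, u 0 s x * log (u 0 s x) ∂unitMeasure)
      - (∫ x, u 0 t x ∂unitMeasure) * log (∫ x, u 0 t x ∂unitMeasure) := by
    rw [entropy, hu.mean_eq s t]
  simp only [hentropy]
  refine HasDerivAt.sub_const _ (hasDerivAt_setIntegral_of_isCompact
    (k' := fun s x => (log (u 0 s x) + 1) * u 2 s x) isCompact_Icc measurableSet_Icc
    (hu.eventually_pos hpos) (fun s _ => ?_) ?_ fun s hs x hx => ?_)
  · exact (continuous_mul_log.comp (hu.continuous_slice 0 s)).continuousOn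
  · have hne : ∀ z ∈ {s | ∀ x ∈ Icc (0 : ℝ) 1, 0 < u 0 s x} ×ˢ Icc (0 : ℝ) 1,
        uncurry (u 0) z ≠ 0 := fun z hz => (hz.1 z.2 hz.2).ne'
    exact ((((hcont 0).continuousOn.log hne).add continuousOn_const).mul (hcont 2).continuousOn)
  · exact (hasDerivAt_mul_log (hs x hx).ne').comp s (hu.hasDerivAt_time 0 s x)

lemma hasDerivAt_fisherInformation {t : ℝ} (hpos : ∀ x, 0 < u 0 t x) :
    HasDerivAt (fun s => fisherInformation unitMeasure (u 0 s) (u 1 s))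
      (∫ x, (2 * u 1 t x * u 3 t x / u 0 t x - u 1 t x ^ 2 * u 2 t x / u 0 t x ^ 2) ∂unitMeasure)
      t := by
  have hcont := hu.continuous
  refine hasDerivAt_setIntegral_of_isCompact (k' := fun s x =>
      2 * u 1 s x * u 3 s x / u 0 s x - u 1 s x ^ 2 * u 2 s x / u 0 s x ^ 2)
    isCompact_Icc measurableSet_Icc (hu.eventually_pos hpos) (fun s hs => ?_) ?_
    fun s hs x hx => ?_
  · exact ((hu.continuous_slice 1 s).pow 2).continuousOn.div (hu.continuous_slice 0 s).continuousOn
      fun x hx => (hs x hx).ne'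
  · have hne : ∀ z ∈ {s | ∀ x ∈ Icc (0 : ℝ) 1, 0 < u 0 s x} ×ˢ Icc (0 : ℝ) 1,
        uncurry (u 0) z ≠ 0 := fun z hz => (hz.1 z.2 hz.2).ne'
    have hcontOn (k : ℕ) := (hcont k).continuousOn
      (s := {s | ∀ x ∈ Icc (0 : ℝ) 1, 0 < u 0 s x} ×ˢ Icc (0 : ℝ) 1)
    exact (((continuousOn_const.mul (hcontOn 1)).mul (hcontOn 3)).div (hcontOn 0) hne).sub
      ((((hcontOn 1).pow 2).mul (hcontOn 2)).div ((hcontOn 0).pow 2) fun z hz =>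
        pow_ne_zero 2 (hne z hz))
  · have hne := (hs x hx).ne'
    refine (((hu.hasDerivAt_time 1 s x).fun_pow 2).fun_div (hu.hasDerivAt_time 0 s x)
      hne).congr_deriv ?_
    field_simp
    ring

lemma monotoneOn_entropy_sub_fisherInformation (hpos : ∀ t, 0 ≤ t → ∀ x, 0 < u 0 t x) :
    MonotoneOn (fun t => entropy unitMeasure (u 0 t) -
      1 / (8 * π ^ 2) * fisherInformation unitMeasure (u 0 t) (u 1 t)) (Ici 0) := by
  have hderiv (t : ℝ) (ht : 0 ≤ t) := (hu.hasDerivAt_entropy (hpos t ht)).sub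
    ((hu.hasDerivAt_fisherInformation (hpos t ht)).const_mul (1 / (8 * π ^ 2)))
  refine monotoneOn_of_deriv_nonneg (convex_Ici 0)
    (fun t ht => (hderiv t ht).continuousAt.continuousWithinAt)
    (fun t ht => (hderiv t (interior_subset ht)).differentiableAt.differentiableWithinAt)
    fun t ht => ?_
  rw [interior_Ici] at ht
  refine (hderiv t (le_of_lt ht)).deriv.symm ▸ ?_
  rw [integral_unitMeasure, integral_unitMeasure]
  exact integral_heat_deriv_entropy_sub_fisherInformation_nonneg (hpos t (le_of_lt ht))
    (hu.hasDerivAt_space 0 t) (hu.hasDerivAt_space 1 t) (hu.hasDerivAt_space 2 t)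
    (hu.continuous_slice 3 t) (hu.apply_one 0 t) (hu.apply_one 1 t) (hu.apply_one 2 t)

/-- The deficit `Ent - I / (8π²)` increases along the flow and is at most the entropy, which
vanishes in the limit. -/
theorem entropy_le_fisherInformation {B M : ℝ} (hpos : ∀ t, 0 ≤ t → ∀ x, 0 < u 0 t x)
    (hbound : ∀ t, 0 ≤ t → ∀ x, |u 0 t x| ≤ B) (hlim : ∀ x, Tendsto (u 0 · x) atTop (𝓝 M)) :
    entropy unitMeasure (u 0 0) ≤
      1 / (8 * π ^ 2) * fisherInformation unitMeasure (u 0 0) (u 1 0) := by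
  have entropy_tendsto : Tendsto (fun t => entropy unitMeasure (u 0 t)) atTop (𝓝 0) := by
    rw [← entropy_const (μ := unitMeasure) M]
    exact tendsto_entropy
      (Eventually.of_forall fun t => (hu.continuous_slice 0 t).aestronglyMeasurable)
      ((eventually_ge_atTop 0).mono hbound) hlim
  refine sub_nonpos.1 (ge_of_tendsto entropy_tendsto ?_)
  filter_upwards [eventually_ge_atTop 0] with t ht
  have fisher_nonneg : 0 ≤ fisherInformation unitMeasure (u 0 t) (u 1 t) :=
    fisherInformation_nonneg (fun x => (hpos t ht x).le) _
  exact (hu.monotoneOn_entropy_sub_fisherInformation hpos self_mem_Ici ht ht).trans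
    (sub_le_self _ (mul_nonneg (by positivity) fisher_nonneg))

end IsPeriodicHeatFlow

end HeatFlow

section TrigonometricPolynomials

/-- The Fourier mode `e^{2πinx}` evolved by the heat equation for time `t`. -/
def heatMode (n : ℤ) (t x : ℝ) : ℂ :=
  Complex.exp ((2 * π * Complex.I * n) ^ 2 * t + 2 * π * Complex.I * n * x)

/-- The `k`-th space derivative, at time `t`, of the real heat flow issued from the trigonometric
polynomial `Re ∑ c n e^{2πinx}`; in particular `heatTrig c k 0` is the `k`-th derivative of that
polynomial. -/
def heatTrig (c : ℤ →₀ ℂ) (k : ℕ) (t x : ℝ) : ℝ :=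
  (c.sum fun n a => a * (2 * π * Complex.I * n) ^ k * heatMode n t x).re

lemma continuous_heatMode (n : ℤ) : Continuous (uncurry (heatMode n)) := by
  unfold heatMode uncurry
  fun_prop

lemma hasDerivAt_heatMode_space (n : ℤ) (t x : ℝ) :
    HasDerivAt (heatMode n t) (2 * π * Complex.I * n * heatMode n t x) x := by
  refine ((((hasDerivAt_id x).ofReal_comp.const_mul (2 * π * Complex.I * n)).const_add
    ((2 * π * Complex.I * n) ^ 2 * t)).cexp).congr_deriv ?_
  simp [heatMode, mul_comm]

lemma hasDerivAt_heatMode_time (n : ℤ) (t x : ℝ) :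
    HasDerivAt (heatMode n · x) ((2 * π * Complex.I * n) ^ 2 * heatMode n t x) t := by
  refine ((((hasDerivAt_id t).ofReal_comp.const_mul ((2 * π * Complex.I * n) ^ 2)).add_const
    (2 * π * Complex.I * n * x)).cexp).congr_deriv ?_
  simp [heatMode, mul_comm]

lemma periodic_heatMode (n : ℤ) (t : ℝ) : Periodic (heatMode n t) 1 := fun x => by
  have : (2 * π * Complex.I * n) ^ 2 * t + 2 * π * Complex.I * n * ((x + 1 : ℝ) : ℂ) =
      ((2 * π * Complex.I * n) ^ 2 * t + 2 * π * Complex.I * n * x) + n * (2 * π * Complex.I) := by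
    push_cast
    ring
  rw [heatMode, this, Complex.exp_add, Complex.exp_int_mul_two_pi_mul_I, mul_one, heatMode]

lemma norm_heatMode (n : ℤ) (t x : ℝ) : ‖heatMode n t x‖ = rexp (-((2 * π * n) ^ 2 * t)) := by
  have : (2 * π * Complex.I * n) ^ 2 * t + 2 * π * Complex.I * n * x =
      ((-((2 * π * n) ^ 2 * t) : ℝ) : ℂ) + ((2 * π * n * x : ℝ) : ℂ) * Complex.I := by
    push_cast
    linear_combination (4 * (π : ℂ) ^ 2 * n ^ 2 * t) * Complex.I_sq
  rw [heatMode, Complex.norm_exp, this, Complex.add_re, Complex.ofReal_re, Complex.re_ofReal_mul,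
    Complex.I_re, mul_zero, add_zero]

lemma norm_heatMode_le_one (n : ℤ) {t : ℝ} (ht : 0 ≤ t) (x : ℝ) : ‖heatMode n t x‖ ≤ 1 := by
  rw [norm_heatMode, exp_le_one_iff, neg_nonpos]
  positivity

lemma tendsto_heatMode_atTop {n : ℤ} (hn : n ≠ 0) (x : ℝ) :
    Tendsto (heatMode n · x) atTop (𝓝 0) := by
  have rate_pos : 0 < (2 * π * n) ^ 2 := by
    have : (n : ℝ) ≠ 0 := mod_cast hn
    positivity
  rw [tendsto_zero_iff_norm_tendsto_zero]
  simp only [norm_heatMode]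
  exact tendsto_exp_neg_atTop_nhds_zero.comp (tendsto_id.const_mul_atTop rate_pos)

/-- The heat kernel at time `t` is the Gaussian of variance `2t`, acting on a Fourier mode through
the characteristic function. -/
lemma integral_heatMode_gaussian (n : ℤ) {t : ℝ} (ht : 0 ≤ t) (x : ℝ) :
    ∫ z, heatMode n 0 (x + √(2 * t) * z) ∂(ProbabilityTheory.gaussianReal 0 1) =
      heatMode n t x := by
  have factor (z : ℝ) : heatMode n 0 (x + √(2 * t) * z) =
      Complex.exp (2 * π * Complex.I * n * x) *
        Complex.exp (((2 * π * n * √(2 * t) : ℝ) : ℂ) * z * Complex.I) := by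
    rw [heatMode, ← Complex.exp_add]
    congr 1
    push_cast
    ring
  have sqrt_sq : ((√(2 * t) : ℝ) : ℂ) ^ 2 = 2 * t := by
    rw [← Complex.ofReal_pow, Real.sq_sqrt (by positivity)]
    push_cast
    rfl
  simp only [factor]
  rw [integral_const_mul, ← charFun_apply_real, ProbabilityTheory.charFun_gaussianReal,
    ← Complex.exp_add, heatMode]
  congr 1
  push_cast
  linear_combination (-4 * (π : ℂ) ^ 2 * n ^ 2 * t) * Complex.I_sq -
    (2 * (π : ℂ) ^ 2 * n ^ 2) * sqrt_sq

variable (c : ℤ →₀ ℂ)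

lemma heatTrig_add (c c' : ℤ →₀ ℂ) (k : ℕ) (t x : ℝ) :
    heatTrig (c + c') k t x = heatTrig c k t x + heatTrig c' k t x := by
  rw [heatTrig, heatTrig, heatTrig, Finsupp.sum_add_index' (by simp) (by intros; ring),
    Complex.add_re]

lemma heatTrig_single (n : ℤ) (a : ℂ) (k : ℕ) (t x : ℝ) :
    heatTrig (Finsupp.single n a) k t x =
      (a * (2 * π * Complex.I * n) ^ k * heatMode n t x).re := by
  rw [heatTrig, Finsupp.sum_single_index (by simp)]

lemma isPeriodicHeatFlow_heatTrig : IsPeriodicHeatFlow (heatTrig c) where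
  continuous k := by
    refine Complex.continuous_re.comp (continuous_finsetSum _ fun n _ => ?_)
    exact continuous_const.mul (continuous_heatMode n)
  hasDerivAt_space k t x := by
    refine Complex.reCLM.hasFDerivAt.comp_hasDerivAt x (HasDerivAt.fun_sum fun n _ => ?_)
    refine ((hasDerivAt_heatMode_space n t x).const_mul _).congr_deriv ?_
    ring
  hasDerivAt_time k t x := by
    refine Complex.reCLM.hasFDerivAt.comp_hasDerivAt t (HasDerivAt.fun_sum fun n _ => ?_)
    refine ((hasDerivAt_heatMode_time n t x).const_mul _).congr_deriv ?_
    ring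
  periodic t x := by
    simp only [heatTrig, periodic_heatMode _ t x]

lemma abs_heatTrig_zero_le {t : ℝ} (ht : 0 ≤ t) (x : ℝ) :
    |heatTrig c 0 t x| ≤ c.sum fun _ a => ‖a‖ := by
  refine (Complex.abs_re_le_norm _).trans ((norm_sum_le _ _).trans
    (Finset.sum_le_sum fun n _ => ?_))
  simp only [pow_zero, mul_one, norm_mul]
  exact mul_le_of_le_one_right (norm_nonneg _) (norm_heatMode_le_one n ht x)

lemma tendsto_heatTrig_atTop (x : ℝ) : Tendsto (heatTrig c 0 · x) atTop (𝓝 (c 0).re) := by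
  induction c using Finsupp.induction_linear with
  | zero => simp [heatTrig]
  | add c c' hc hc' => simpa only [heatTrig_add, Finsupp.add_apply, Complex.add_re] using hc.add hc'
  | single n a =>
    simp only [heatTrig_single, pow_zero, mul_one]
    refine (Complex.continuous_re.tendsto _).comp ?_
    rcases eq_or_ne n 0 with rfl | hn
    · simp [heatMode]
    · simpa [hn] using (tendsto_heatMode_atTop hn x).const_mul a

lemma integral_heatTrig_gaussian {t : ℝ} (ht : 0 ≤ t) (x : ℝ) :
    ∫ z, heatTrig c 0 0 (x + √(2 * t) * z) ∂(ProbabilityTheory.gaussianReal 0 1) =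
      heatTrig c 0 t x := by
  have mode_integrable (n : ℤ) : Integrable (fun z => heatMode n 0 (x + √(2 * t) * z))
      (ProbabilityTheory.gaussianReal 0 1) :=
    .of_bound (by unfold heatMode; fun_prop : Continuous _).aestronglyMeasurable 1
      (ae_of_all _ fun z => norm_heatMode_le_one n le_rfl _)
  have term_integrable (n : ℤ) := (mode_integrable n).const_mul (c n * (2 * π * Complex.I * n) ^ 0)
  have integral_re := Complex.reCLM.integral_comp_comm
    (integrable_finsetSum c.support fun n _ => term_integrable n)
  rw [integral_finsetSum _ fun n _ => term_integrable n] at integral_re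
  simp only [integral_const_mul, integral_heatMode_gaussian _ ht] at integral_re
  exact integral_re

lemma heatTrig_pos (hpos : ∀ x, 0 < heatTrig c 0 0 x) {t : ℝ} (ht : 0 ≤ t) (x : ℝ) :
    0 < heatTrig c 0 t x := by
  have cont := (isPeriodicHeatFlow_heatTrig c).continuous_slice 0 0
  rw [← integral_heatTrig_gaussian c ht]
  exact integral_pos_of_forall_pos (.of_bound (by fun_prop : Continuous _).aestronglyMeasurable _
    (ae_of_all _ fun z => abs_heatTrig_zero_le c le_rfl _)) fun z => hpos _

lemma entropy_heatTrig_le (hpos : ∀ x, 0 < heatTrig c 0 0 x) :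
    entropy unitMeasure (heatTrig c 0 0) ≤
      1 / (8 * π ^ 2) * fisherInformation unitMeasure (heatTrig c 0 0) (heatTrig c 1 0) :=
  (isPeriodicHeatFlow_heatTrig c).entropy_le_fisherInformation (fun _ => heatTrig_pos c hpos)
    (fun _ => abs_heatTrig_zero_le c) (tendsto_heatTrig_atTop c)

lemma exists_heatTrig_near {g : ℝ → ℝ} (hg : Continuous g) (hper : Periodic g 1) {ε : ℝ}
    (hε : 0 < ε) : ∃ c, ∀ x, |heatTrig c 0 0 x - g x| ≤ ε := by
  have hper' : Periodic (fun x => (g x : ℂ)) 1 := fun x => by simp only [hper x]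
  let G : C(AddCircle (1 : ℝ), ℂ) :=
    ⟨hper'.lift, continuous_coinduced_dom.2 (Complex.continuous_ofReal.comp hg)⟩
  have hG : G ∈ (Submodule.span ℂ (range <| @fourier (1 : ℝ))).topologicalClosure := by
    rw [span_fourier_closure_eq_top]
    exact Submodule.mem_top
  obtain ⟨h, hh, hGh⟩ := Metric.mem_closure_iff.1 hG ε hε
  obtain ⟨c, rfl⟩ := Finsupp.mem_span_range_iff_exists_finsupp.1 hh
  refine ⟨c, fun x => ?_⟩
  have heatTrig_eq : heatTrig c 0 0 x =
      ((c.sum fun n a => a • @fourier 1 n : C(AddCircle (1 : ℝ), ℂ)) x).re := by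
    simp [heatTrig, heatMode, Finsupp.sum, ContinuousMap.sum_apply]
  calc |heatTrig c 0 0 x - g x|
      = |((c.sum fun n a => a • @fourier 1 n : C(AddCircle (1 : ℝ), ℂ)) x - G x).re| := by
        rw [heatTrig_eq, Complex.sub_re]
        rfl
    _ ≤ ε := by
        refine (Complex.abs_re_le_norm _).trans ?_
        rw [← dist_eq_norm, dist_comm]
        exact (ContinuousMap.dist_apply_le_dist _).trans hGh.le

lemma exists_heatTrig_one_eq_sub :
    ∃ c' : ℤ →₀ ℂ, ∀ x, heatTrig c' 1 0 x = heatTrig c 0 0 x - (c 0).re := by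
  induction c using Finsupp.induction_linear with
  | zero => exact ⟨0, by simp [heatTrig]⟩
  | add c₁ c₂ h₁ h₂ =>
    obtain ⟨c₁', h₁⟩ := h₁
    obtain ⟨c₂', h₂⟩ := h₂
    refine ⟨c₁' + c₂', fun x => ?_⟩
    rw [heatTrig_add, heatTrig_add, h₁, h₂, Finsupp.add_apply, Complex.add_re]
    ring
  | single n a =>
    refine ⟨Finsupp.single n (a / (2 * π * Complex.I * n)), fun x => ?_⟩
    rw [heatTrig_single, heatTrig_single]
    rcases eq_or_ne n 0 with rfl | hn
    · simp [heatMode]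
    · have : 2 * π * Complex.I * n ≠ 0 := by simp [hn]
      simp [hn, div_mul_cancel₀ _ this]

lemma integral_heatTrig : ∫ x in (0 : ℝ)..1, heatTrig c 0 0 x = (c 0).re := by
  obtain ⟨c', hc'⟩ := exists_heatTrig_one_eq_sub c
  have flow := isPeriodicHeatFlow_heatTrig c
  have flow' := isPeriodicHeatFlow_heatTrig c'
  have := integral_eq_zero_of_hasDerivAt (flow'.hasDerivAt_space 0 0) (flow'.continuous_slice 1 0)
    (flow'.apply_one 0 0)
  simp only [zero_add, hc'] at this
  rw [intervalIntegral.integral_sub ((flow.continuous_slice 0 0).intervalIntegrable _ _)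
    intervalIntegrable_const, intervalIntegral.integral_const] at this
  simpa [sub_eq_zero] using this

lemma abs_le_of_periodic_of_hasDerivAt {g g' : ℝ → ℝ} {C : ℝ}
    (hg : ∀ x, HasDerivAt g (g' x) x) (hper : Periodic g 1) (h0 : g 0 = 0)
    (hbound : ∀ x, |g' x| ≤ C) (x : ℝ) : |g x| ≤ C := by
  obtain ⟨y, hy, hxy⟩ := hper.exists_mem_Ico₀ zero_lt_one x
  have mean_value := convex_univ.norm_image_sub_le_of_norm_hasDerivWithin_le
    (fun x _ => (hg x).hasDerivWithinAt) (fun x _ => hbound x) (mem_univ 0) (mem_univ y)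
  have hC : 0 ≤ C := (abs_nonneg _).trans (hbound 0)
  rw [h0, sub_zero, sub_zero, norm_eq_abs, norm_eq_abs, abs_of_nonneg hy.1] at mean_value
  rw [hxy]
  exact mean_value.trans (mul_le_of_le_one_right hC hy.2.le)

lemma exists_heatTrig_near_with_deriv {f f' : ℝ → ℝ} (hf : ∀ x, HasDerivAt f (f' x) x)
    (hf' : Continuous f') (hper : Periodic f 1) {ε : ℝ} (hε : 0 < ε) :
    ∃ c, ∀ x, |heatTrig c 0 0 x - f x| ≤ ε ∧ |heatTrig c 1 0 x - f' x| ≤ ε := by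
  obtain ⟨c, hc⟩ := exists_heatTrig_near hf' (periodic_of_hasDerivAt hf hper) (half_pos hε)
  obtain ⟨c', hc'⟩ := exists_heatTrig_one_eq_sub c
  have mean_small : |(c 0).re| ≤ ε / 2 := by
    have cont := (isPeriodicHeatFlow_heatTrig c).continuous_slice 0 0
    have mean_f' : ∫ x in (0 : ℝ)..1, f' x = 0 :=
      integral_eq_zero_of_hasDerivAt hf hf' (by simpa using hper 0)
    have mean_sub : ∫ x in (0 : ℝ)..1, (heatTrig c 0 0 x - f' x) = (c 0).re := by
      rw [intervalIntegral.integral_sub (cont.intervalIntegrable _ _)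
        (hf'.intervalIntegrable _ _), mean_f', integral_heatTrig, sub_zero]
    simpa [mean_sub] using intervalIntegral.norm_integral_le_of_norm_le_const
      (a := 0) (b := 1) (f := fun x => heatTrig c 0 0 x - f' x) fun x _ => hc x
  let c'' := c' + Finsupp.single 0 ((f 0 - heatTrig c' 0 0 0 : ℝ) : ℂ)
  have flow := isPeriodicHeatFlow_heatTrig c''
  have deriv_near (x : ℝ) : |heatTrig c'' 1 0 x - f' x| ≤ ε := by
    have : heatTrig c'' 1 0 x - f' x = heatTrig c 0 0 x - f' x - (c 0).re := by
      simp only [c'', heatTrig_add, heatTrig_single, hc']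
      simp
      ring
    rw [this]
    exact (abs_sub _ _).trans (by linarith [hc x])
  refine ⟨c'', fun x => ⟨?_, deriv_near x⟩⟩
  refine abs_le_of_periodic_of_hasDerivAt (g := fun x => heatTrig c'' 0 0 x - f x)
    (fun x => (flow.hasDerivAt_space 0 0 x).sub (hf x)) ((flow.periodic 0).sub hper) ?_
    deriv_near x
  simp only [c'', heatTrig_add, heatTrig_single]
  simp [heatMode]

end TrigonometricPolynomials

section Circle

lemma exists_pos_forall_le_of_periodic {f : ℝ → ℝ} {c : ℝ} (hf : Continuous f)
    (hper : Periodic f c) (hc : c ≠ 0) (hpos : ∀ x, 0 < f x) : ∃ m > 0, ∀ x, m ≤ f x := by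
  obtain ⟨_, ⟨x₀, rfl⟩, hx₀⟩ :=
    (hper.compact_of_continuous hc hf).exists_isLeast (range_nonempty f)
  exact ⟨f x₀, hpos x₀, fun x => hx₀ (mem_range_self x)⟩

lemma exists_forall_abs_le_of_periodic {f : ℝ → ℝ} {c : ℝ} (hf : Continuous f)
    (hper : Periodic f c) (hc : c ≠ 0) : ∃ B, ∀ x, |f x| ≤ B := by
  obtain ⟨B, hB⟩ := (hper.isBounded_of_continuous hc hf).exists_norm_le
  exact ⟨B, fun x => hB _ (mem_range_self x)⟩

lemma tendsto_of_forall_abs_sub_le_one_div {F : ℕ → ℝ} {a : ℝ}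
    (hF : ∀ k, |F k - a| ≤ 1 / ((k : ℝ) + 1)) : Tendsto F atTop (𝓝 a) :=
  tendsto_iff_norm_sub_tendsto_zero.2 <|
    squeeze_zero (fun _ => norm_nonneg _) hF tendsto_one_div_add_atTop_nhds_zero_nat

theorem entropy_unitMeasure_le {f f' : ℝ → ℝ} (hf : ∀ x, HasDerivAt f (f' x) x)
    (hf' : Continuous f') (hper : Periodic f 1) (hpos : ∀ x, 0 < f x) :
    entropy unitMeasure f ≤ 1 / (8 * π ^ 2) * fisherInformation unitMeasure f f' := by
  have hf_cont := continuous_of_hasDerivAt hf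
  obtain ⟨m, hm, hmf⟩ := exists_pos_forall_le_of_periodic hf_cont hper one_ne_zero hpos
  obtain ⟨B, hB⟩ := exists_forall_abs_le_of_periodic hf_cont hper one_ne_zero
  obtain ⟨B', hB'⟩ :=
    exists_forall_abs_le_of_periodic hf' (periodic_of_hasDerivAt hf hper) one_ne_zero
  choose c hc using fun k : ℕ =>
    exists_heatTrig_near_with_deriv hf hf' hper (ε := 1 / (k + 1)) Nat.one_div_pos_of_nat
  have flow (k : ℕ) := isPeriodicHeatFlow_heatTrig (c k)
  have hε_le_one (k : ℕ) : 1 / ((k : ℝ) + 1) ≤ 1 := by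
    rw [div_le_one (by positivity)]
    exact le_add_of_nonneg_left k.cast_nonneg
  have hlim (x : ℝ) : Tendsto (fun k => heatTrig (c k) 0 0 x) atTop (𝓝 (f x)) :=
    tendsto_of_forall_abs_sub_le_one_div fun k => (hc k x).1
  have hlim' (x : ℝ) : Tendsto (fun k => heatTrig (c k) 1 0 x) atTop (𝓝 (f' x)) :=
    tendsto_of_forall_abs_sub_le_one_div fun k => (hc k x).2
  have hlow : ∀ᶠ k in atTop, ∀ x, m / 2 ≤ heatTrig (c k) 0 0 x := by
    filter_upwards [(tendsto_one_div_add_atTop_nhds_zero_nat (𝕜 := ℝ)).eventually_le_const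
      (half_pos hm)] with k hk x
    linarith [hmf x, (abs_le.1 (hc k x).1).1]
  have hbound (k : ℕ) (x : ℝ) : |heatTrig (c k) 0 0 x| ≤ B + 1 := by
    linarith [abs_sub_abs_le_abs_sub (heatTrig (c k) 0 0 x) (f x), hB x, (hc k x).1, hε_le_one k]
  have hbound' (k : ℕ) (x : ℝ) : |heatTrig (c k) 1 0 x| ≤ B' + 1 := by
    linarith [abs_sub_abs_le_abs_sub (heatTrig (c k) 1 0 x) (f' x), hB' x, (hc k x).2, hε_le_one k]
  have hmeas (j : ℕ) : ∀ᶠ k in atTop, AEStronglyMeasurable (heatTrig (c k) j 0) unitMeasure :=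
    .of_forall fun k => ((flow k).continuous_slice j 0).aestronglyMeasurable
  refine le_of_tendsto_of_tendsto (tendsto_entropy (hmeas 0) (.of_forall hbound) hlim)
    ((tendsto_fisherInformation (half_pos hm) (hmeas 0) (hmeas 1) hlow (.of_forall hbound')
      (fun x => (hpos x).ne') hlim hlim').const_mul _) ?_
  filter_upwards [hlow] with k hk
  exact entropy_heatTrig_le (c k) fun x => (half_pos hm).trans_le (hk x)

end Circle

section Torus

/-- Lebesgue measure on `[0, 1]^d`, the uniform measure of the torus `ℝ^d / ℤ^d`. -/
abbrev cubeMeasure (d : ℕ) : Measure (Fin d → ℝ) :=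
  volume.restrict (Icc 0 1)

instance (d : ℕ) : IsProbabilityMeasure (cubeMeasure d) :=
  ⟨by simp [Real.volume_Icc_pi]⟩

/-- A positive continuously differentiable function on the torus `ℝ^d / ℤ^d`, seen as a periodic
function on `ℝ^d`, together with its partial derivatives: `f' i` stands for `∂ᵢf`. -/
structure IsTorusDensity {d : ℕ} (f : (Fin d → ℝ) → ℝ) (f' : Fin d → (Fin d → ℝ) → ℝ) :
    Prop where
  continuous : Continuous f
  continuous_partial : ∀ i, Continuous (f' i)
  hasDerivAt_partial : ∀ i x, HasDerivAt (fun s => f (update x i s)) (f' i x) (x i)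
  periodic : ∀ i x, Periodic (fun s => f (update x i s)) 1
  pos : ∀ x, 0 < f x

lemma measurePreserving_cons_cubeMeasure (d : ℕ) :
    MeasurePreserving (MeasurableEquiv.piFinSuccAbove (fun _ : Fin (d + 1) => ℝ) 0).symm
      (unitMeasure.prod (cubeMeasure d)) (cubeMeasure (d + 1)) := by
  have preimage_cube : (MeasurableEquiv.piFinSuccAbove (fun _ : Fin (d + 1) => ℝ) 0).symm ⁻¹'
      Icc 0 1 = Icc (0 : ℝ) 1 ×ˢ Icc (0 : Fin d → ℝ) 1 := by
    ext z
    exact Fin.insertNth_mem_Icc (α := fun _ => ℝ)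
  have := (volume_preserving_piFinSuccAbove (fun _ : Fin (d + 1) => ℝ) 0).symm
    |>.restrict_preimage (s := Icc 0 1) measurableSet_Icc
  rwa [preimage_cube, Measure.volume_eq_prod, ← Measure.prod_restrict] at this

lemma piFinSuccAbove_zero_symm_apply {d : ℕ} (z : ℝ × (Fin d → ℝ)) :
    (MeasurableEquiv.piFinSuccAbove (fun _ : Fin (d + 1) => ℝ) 0).symm z = Fin.cons z.1 z.2 :=
  Fin.insertNth_zero' z.1 z.2

lemma entropy_cubeMeasure_succ {d : ℕ} (f : (Fin (d + 1) → ℝ) → ℝ) :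
    entropy (cubeMeasure (d + 1)) f =
      entropy (unitMeasure.prod (cubeMeasure d)) fun z => f (Fin.cons z.1 z.2) := by
  rw [← (measurePreserving_cons_cubeMeasure d).map_eq, entropy_map_equiv]
  simp only [piFinSuccAbove_zero_symm_apply]

lemma fisherInformation_cubeMeasure_succ {d : ℕ} (f f' : (Fin (d + 1) → ℝ) → ℝ) :
    fisherInformation (cubeMeasure (d + 1)) f f' =
      fisherInformation (unitMeasure.prod (cubeMeasure d)) (fun z => f (Fin.cons z.1 z.2))
        fun z => f' (Fin.cons z.1 z.2) := by
  rw [← (measurePreserving_cons_cubeMeasure d).map_eq, fisherInformation_map_equiv]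
  simp only [piFinSuccAbove_zero_symm_apply]

lemma integrable_unitMeasure_prod_cubeMeasure {d : ℕ} {g : ℝ × (Fin d → ℝ) → ℝ}
    (hg : Continuous g) : Integrable g (unitMeasure.prod (cubeMeasure d)) := by
  rw [Measure.prod_restrict]
  exact hg.continuousOn.integrableOn_compact (isCompact_Icc.prod isCompact_Icc)

lemma continuous_integral_cons {d : ℕ} {g : (Fin (d + 1) → ℝ) → ℝ} (hg : Continuous g) :
    Continuous fun y : Fin d → ℝ => ∫ s, g (Fin.cons s y) ∂unitMeasure :=
  continuous_parametric_integral_of_continuous (by fun_prop) isCompact_Icc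

namespace IsTorusDensity

variable {d : ℕ}

lemma entropy_slice_le {f : (Fin (d + 1) → ℝ) → ℝ} {f' : Fin (d + 1) → (Fin (d + 1) → ℝ) → ℝ}
    (hf : IsTorusDensity f f') (y : Fin d → ℝ) :
    entropy unitMeasure (fun s => f (Fin.cons s y)) ≤ 1 / (8 * π ^ 2) *
      fisherInformation unitMeasure (fun s => f (Fin.cons s y)) fun s => f' 0 (Fin.cons s y) := by
  refine entropy_unitMeasure_le (fun s => ?_) ?_ ?_ fun s => hf.pos _
  · simpa using hf.hasDerivAt_partial 0 (Fin.cons s y)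
  · exact (hf.continuous_partial 0).comp (by fun_prop)
  · simpa using hf.periodic 0 (Fin.cons 0 y)

lemma marginal {f : (Fin (d + 1) → ℝ) → ℝ} {f' : Fin (d + 1) → (Fin (d + 1) → ℝ) → ℝ}
    (hf : IsTorusDensity f f') :
    IsTorusDensity (fun y => ∫ s, f (Fin.cons s y) ∂unitMeasure)
      fun i y => ∫ s, f' i.succ (Fin.cons s y) ∂unitMeasure where
  continuous := continuous_integral_cons hf.continuous
  continuous_partial i := continuous_integral_cons (hf.continuous_partial i.succ)
  hasDerivAt_partial i y := by
    have cont := hf.continuous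
    have cont' := hf.continuous_partial i.succ
    have hderiv (s r : ℝ) : HasDerivAt (fun s => f (Fin.cons r (update y i s)))
        (f' i.succ (Fin.cons r (update y i s))) s := by
      simpa [← Fin.cons_update] using hf.hasDerivAt_partial i.succ (Fin.cons r (update y i s))
    simpa using hasDerivAt_setIntegral_of_isCompact (μ := volume) (t := y i) isCompact_Icc
      measurableSet_Icc univ_mem (fun s _ => (by fun_prop : Continuous _).continuousOn)
      (by fun_prop : Continuous _).continuousOn fun s _ r _ => hderiv s r
  periodic i y s := by
    simp only [Fin.cons_update]
    congr 1 with r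
    exact hf.periodic i.succ _ s
  pos y := by
    have cont := hf.continuous
    exact integral_pos_of_forall_pos
      (by fun_prop : Continuous _).continuousOn.integrableOn_Icc fun s => hf.pos _

lemma entropy_succ_le {f : (Fin (d + 1) → ℝ) → ℝ} {f' : Fin (d + 1) → (Fin (d + 1) → ℝ) → ℝ}
    (hf : IsTorusDensity f f') :
    entropy (cubeMeasure (d + 1)) f ≤
      1 / (8 * π ^ 2) * fisherInformation (cubeMeasure (d + 1)) f (f' 0) +
        entropy (cubeMeasure d) fun y => ∫ s, f (Fin.cons s y) ∂unitMeasure := by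
  have cont : Continuous fun z : ℝ × (Fin d → ℝ) => f (Fin.cons z.1 z.2) :=
    hf.continuous.comp (by fun_prop)
  have cont' : Continuous fun z : ℝ × (Fin d → ℝ) => f' 0 (Fin.cons z.1 z.2) :=
    (hf.continuous_partial 0).comp (by fun_prop)
  have hlog := integrable_unitMeasure_prod_cubeMeasure (continuous_mul_log.comp cont)
  have hmarginal := (continuous_mul_log.comp hf.marginal.continuous).integrableOn_Icc
    (μ := volume) (a := 0) (b := 1)
  have hfisher := integrable_unitMeasure_prod_cubeMeasure
    ((cont'.pow 2).div cont fun z => (hf.pos _).ne')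
  rw [entropy_cubeMeasure_succ, fisherInformation_cubeMeasure_succ,
    entropy_prod (integrable_unitMeasure_prod_cubeMeasure cont) hlog hmarginal]
  gcongr
  exact integral_entropy_slice_le hlog hmarginal hfisher hf.entropy_slice_le

lemma fisherInformation_marginal_le_succ {f : (Fin (d + 1) → ℝ) → ℝ}
    {f' : Fin (d + 1) → (Fin (d + 1) → ℝ) → ℝ} (hf : IsTorusDensity f f') (i : Fin (d + 1)) :
    fisherInformation (cubeMeasure d) (fun y => ∫ s, f (Fin.cons s y) ∂unitMeasure)
        (fun y => ∫ s, f' i (Fin.cons s y) ∂unitMeasure) ≤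
      fisherInformation (cubeMeasure (d + 1)) f (f' i) := by
  have cont := hf.continuous
  have cont' := hf.continuous_partial i
  have cont_div : Continuous fun x => f' i x ^ 2 / f x :=
    (cont'.pow 2).div cont fun x => (hf.pos x).ne'
  have cont_cons (y : Fin d → ℝ) : Continuous fun s : ℝ => (Fin.cons s y : Fin (d + 1) → ℝ) := by
    fun_prop
  rw [fisherInformation_cubeMeasure_succ]
  exact fisherInformation_marginal_le (f := fun z : ℝ × (Fin d → ℝ) => f (Fin.cons z.1 z.2))
    (g := fun z => f' i (Fin.cons z.1 z.2)) (fun z => hf.pos _)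
    (fun y => (cont.comp (cont_cons y)).integrableOn_Icc)
    (fun y => (cont'.comp (cont_cons y)).integrableOn_Icc)
    (fun y => (cont_div.comp (cont_cons y)).integrableOn_Icc)
    (integrable_unitMeasure_prod_cubeMeasure (cont_div.comp (by fun_prop)))

theorem entropy_le {f : (Fin d → ℝ) → ℝ} {f' : Fin d → (Fin d → ℝ) → ℝ}
    (hf : IsTorusDensity f f') :
    entropy (cubeMeasure d) f ≤
      1 / (8 * π ^ 2) * ∑ i, fisherInformation (cubeMeasure d) f (f' i) := by
  induction d with
  | zero =>
    have hconst : f = fun _ => f 0 := funext fun x => congrArg f (Subsingleton.elim x 0)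
    rw [hconst, entropy_const, Finset.univ_eq_empty, Finset.sum_empty, mul_zero]
  | succ d ih =>
    calc entropy (cubeMeasure (d + 1)) f
        ≤ 1 / (8 * π ^ 2) * fisherInformation (cubeMeasure (d + 1)) f (f' 0) +
          entropy (cubeMeasure d) fun y => ∫ s, f (Fin.cons s y) ∂unitMeasure := hf.entropy_succ_le
      _ ≤ 1 / (8 * π ^ 2) * fisherInformation (cubeMeasure (d + 1)) f (f' 0) +
          1 / (8 * π ^ 2) * ∑ i : Fin d, fisherInformation (cubeMeasure (d + 1)) f (f' i.succ) := by
        gcongr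
        refine (ih hf.marginal).trans ?_
        gcongr with i
        exact hf.fisherInformation_marginal_le_succ i.succ
      _ = 1 / (8 * π ^ 2) * ∑ i, fisherInformation (cubeMeasure (d + 1)) f (f' i) := by
        rw [Fin.sum_univ_succ, mul_add]

lemma of_contDiff {f : (Fin d → ℝ) → ℝ} (hf : ContDiff ℝ 1 f)
    (hper : ∀ (k : Fin d → ℤ) (x : Fin d → ℝ), f (x + fun i => (k i : ℝ)) = f x)
    (hpos : ∀ x, 0 < f x) :
    IsTorusDensity f fun i x => fderiv ℝ f x (Pi.single i 1) where
  continuous := hf.continuous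
  continuous_partial i := (hf.continuous_fderiv one_ne_zero).clm_apply continuous_const
  hasDerivAt_partial i x := by
    have hfderiv := (hf.differentiable one_ne_zero (update x i (x i))).hasFDerivAt
    rw [update_eq_self] at hfderiv
    exact HasFDerivAt.comp_hasDerivAt_of_eq (x i) hfderiv (hasDerivAt_update x i (x i))
      (update_eq_self i x).symm
  periodic i x s := by
    have shift : update x i (s + 1) =
        update x i s + fun j => ((Pi.single i 1 : Fin d → ℤ) j : ℝ) := by
      ext j
      rcases eq_or_ne j i with rfl | hj <;> simp [*]
    simp only [shift, hper]
  pos := hpos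

lemma sum_fisherInformation {f : (Fin d → ℝ) → ℝ} {f' : Fin d → (Fin d → ℝ) → ℝ}
    (hf : IsTorusDensity f f') :
    ∑ i, fisherInformation (cubeMeasure d) f (f' i) =
      ∫ x, (∑ i, f' i x ^ 2) / f x ∂cubeMeasure d := by
  simp only [fisherInformation, Finset.sum_div]
  refine (integral_finsetSum _ fun i _ => Continuous.integrableOn_Icc ?_).symm
  exact ((hf.continuous_partial i).pow 2).div hf.continuous fun x => (hf.pos x).ne'

end IsTorusDensity

theorem uniform_logSobolev_general (d : ℕ) (f : (Fin d → ℝ) → ℝ) (hf : ContDiff ℝ 1 f)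
    (hf_per : ∀ (k : Fin d → ℤ) (x : Fin d → ℝ), f (x + fun i => (k i : ℝ)) = f x)
    (hf_pos : ∀ x, 0 < f x) :
    (∫ x in Icc (0 : Fin d → ℝ) 1, f x * log (f x)) -
        (∫ x in Icc (0 : Fin d → ℝ) 1, f x) * log (∫ x in Icc (0 : Fin d → ℝ) 1, f x) ≤
      (1 / (8 * π ^ 2)) * ∫ x in Icc (0 : Fin d → ℝ) 1,
        (∑ α, (fderiv ℝ f x (Pi.single α 1)) ^ 2) / f x := by
  have density := IsTorusDensity.of_contDiff hf hf_per hf_pos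
  rw [← density.sum_fisherInformation]
  exact density.entropy_le

end Torus

/-- logarithmic Sobolev inequality for the uniform measure on the torus
`T^d = ℝ^d/ℤ^d`, with constant `1/(8π²)`.  Functions on the torus are modeled as
`ℤ^d`-periodic functions on `ℝ^d`, and the uniform probability measure is Lebesgue
measure on `[0,1]^d`. -/
theorem uniform_logSobolev (d : ℕ)
    (f : (Fin d → ℝ) → ℝ)
    (hf_smooth : ContDiff ℝ (⊤ : ℕ∞) f)
    (hf_per : ∀ (k : Fin d → ℤ) (x : Fin d → ℝ), f (x + fun i => (k i : ℝ)) = f x)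
    (hf_pos : ∀ x, 0 < f x) :
    (∫ x in Set.Icc (0 : Fin d → ℝ) 1, f x * Real.log (f x)) -
        (∫ x in Set.Icc (0 : Fin d → ℝ) 1, f x) *
          Real.log (∫ x in Set.Icc (0 : Fin d → ℝ) 1, f x) ≤
      (1 / (8 * π ^ 2)) *
        ∫ x in Set.Icc (0 : Fin d → ℝ) 1,
          (∑ α, (fderiv ℝ f x (Pi.single α 1)) ^ 2) / f x := by
  exact uniform_logSobolev_general d f (hf_smooth.of_le (mod_cast le_top)) hf_per hf_pos

end
end

section
/- Let μ be a probability measure on T^d and let φ ∈ L^∞(T^d × T^d) satisfy the cancellations ∫_{T^d} φ(x, z) μ(dx) = 0 and ∫_{T^d} φ(z, x) μ(dx) = 0 for every z ∈ T^d, and assume γ := (1600² + 36e⁴) ( sup_{p ≥ 1} (1/p) ‖ sup_z |φ(·, z)| ‖_{L^p(μ)} )² < 1. Then for every N ∈ ℕ: ∫_{T^{dN}} exp( (1/N) Σ_{i=1}^N Σ_{j=1}^N φ(x_i, x_j) ) μ^{⊗N}(dX) ≤ 2/(1−γ) < ∞. -/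
open MeasureTheory Real Set

noncomputable section

/-- The `d`-dimensional torus `T^d = ℝ^d/ℤ^d`. -/
abbrev Torus (d : ℕ) := Fin d → AddCircle (1 : ℝ)

/-- The function `x ↦ sup_z |φ(x,z)|`. -/
def supSecond {d : ℕ} (φ : Torus d → Torus d → ℝ) (x : Torus d) : ℝ :=
  ⨆ z : Torus d, |φ x z|

/-- The constant `γ = (1600² + 36e⁴) (sup_{p≥1} (1/p) ‖sup_z |φ(·,z)|‖_{L^p(μ)})²`. -/
def gammaConst {d : ℕ} (μ : Measure (Torus d)) (φ : Torus d → Torus d → ℝ) : ℝ :=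
  (1600 ^ 2 + 36 * Real.exp 4) *
    (⨆ p ∈ Set.Ici (1 : ℝ), (1 / p) * (∫ x, supSecond φ x ^ p ∂μ) ^ (1 / p)) ^ 2

/-!
The off-diagonal part of `∑ i, ∑ j, φ (x i) (x j)` is four times the average, over all sets `s` of
indices, of `∑ i ∈ s, ∑ j ∉ s, φ (x i) (x j)`. Bounds on exponential moments are preserved by convex
combinations, so it suffices to treat the diagonal and each of these decoupled sums, in which the
two groups of variables are independent.

Given the second group `z`, the cancellation in the first variable bounds the exponential moment
over the first group by the exponential of a quadratic quantity, the integral of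
`(∑ j, ψ x (z j)) ^ 2` against the weight `exp (F x)`, where `F` dominates `ψ`. Moving part of this
weight into the kernel makes it bounded by `1` while the measure becomes a tilt of `μ`. Jensen's
inequality then takes the integral in `x` out of the exponential, and for each fixed `x` the
cancellation in the second variable makes the sum over `j` sub-Gaussian, so that its square has a
bounded exponential moment. The growth of the `L^p` norms enters only through the exponential moment
of `F` that normalises the tilt and controls the diagonal.
-/

open Finset ProbabilityTheory
open scoped NNReal

section ExponentialMoments

variable {Ω : Type*} [MeasurableSpace Ω] {μ : Measure Ω} {F G : Ω → ℝ} {c : ℝ}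

/-- The functions `F` with exponential moment `∫ exp F ∂μ ≤ c`. Integrability of `exp F` is part of
the condition because the Bochner integral of a non-integrable function is `0`. -/
def expMomentSublevel (μ : Measure Ω) (c : ℝ) : Set (Ω → ℝ) :=
  {F | Integrable (fun x => exp (F x)) μ ∧ ∫ x, exp (F x) ∂μ ≤ c}

theorem expMomentSublevel_mono : Monotone (expMomentSublevel μ) :=
  fun _ _ hcc' _ hF => ⟨hF.1, hF.2.trans hcc'⟩

theorem aemeasurable_of_mem_expMomentSublevel (hF : F ∈ expMomentSublevel μ c) :
    AEMeasurable F μ :=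
  aemeasurable_of_aemeasurable_exp hF.1.aemeasurable

theorem mem_expMomentSublevel_of_le (hF : F ∈ expMomentSublevel μ c) (hG : AEMeasurable G μ)
    (hGF : ∀ x, G x ≤ F x) : G ∈ expMomentSublevel μ c := by
  have hexp : ∀ x, exp (G x) ≤ exp (F x) := fun x => exp_le_exp.2 (hGF x)
  have hint : Integrable (fun x => exp (G x)) μ :=
    hF.1.mono' hG.exp.aestronglyMeasurable (ae_of_all _ fun x => by simpa using hGF x)
  exact ⟨hint, (integral_mono hint hF.1 hexp).trans hF.2⟩

theorem convex_expMomentSublevel : Convex ℝ (expMomentSublevel μ c) := by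
  intro F hF G hG a b ha hb hab
  have hle : ∀ x, exp ((a • F + b • G) x) ≤ a * exp (F x) + b * exp (G x) := fun x =>
    convexOn_exp.2 (mem_univ _) (mem_univ _) ha hb hab
  have hmeas : AEMeasurable (a • F + b • G) μ :=
    ((aemeasurable_of_mem_expMomentSublevel hF).const_smul a).add
      ((aemeasurable_of_mem_expMomentSublevel hG).const_smul b)
  have hint : Integrable (fun x => a * exp (F x) + b * exp (G x)) μ :=
    (hF.1.const_mul a).add (hG.1.const_mul b)
  have hint' : Integrable (fun x => exp ((a • F + b • G) x)) μ :=
    hint.mono' hmeas.exp.aestronglyMeasurable (ae_of_all _ fun x => by simpa using hle x)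
  refine ⟨hint', ?_⟩
  calc ∫ x, exp ((a • F + b • G) x) ∂μ ≤ ∫ x, (a * exp (F x) + b * exp (G x)) ∂μ :=
        integral_mono hint' hint hle
    _ = a * ∫ x, exp (F x) ∂μ + b * ∫ x, exp (G x) ∂μ := by
        rw [integral_add (hF.1.const_mul a) (hG.1.const_mul b), integral_const_mul,
          integral_const_mul]
    _ ≤ a * c + b * c := by gcongr <;> [exact hF.2; exact hG.2]
    _ = c := by rw [← add_mul, hab, one_mul]

theorem inv_card_mul_sum_mem_expMomentSublevel {κ : Type*} [Fintype κ] [Nonempty κ]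
    {F : κ → Ω → ℝ} (hF : ∀ k, F k ∈ expMomentSublevel μ c) :
    (fun x => (Fintype.card κ : ℝ)⁻¹ * ∑ k, F k x) ∈ expMomentSublevel μ c := by
  convert convex_expMomentSublevel.sum_mem (t := univ) (w := fun _ : κ => (Fintype.card κ : ℝ)⁻¹)
    (fun _ _ => by positivity) (by simp) (fun k _ => hF k) with x
  simp [mul_sum]

theorem comp_mem_expMomentSublevel {Ω' : Type*} [MeasurableSpace Ω'] {ν : Measure Ω'}
    {T : Ω' → Ω} (hT : MeasurePreserving T ν μ) (hF : F ∈ expMomentSublevel μ c) :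
    F ∘ T ∈ expMomentSublevel ν c := by
  refine ⟨hT.integrable_comp_of_integrable hF.1, ?_⟩
  have hmap := integral_map (f := fun x => exp (F x)) hT.aemeasurable
    (by rw [hT.map_eq]; exact hF.1.aestronglyMeasurable)
  rw [hT.map_eq] at hmap
  exact hmap.symm.trans_le hF.2

theorem integrable_exp_sum_pi {ι : Type*} [Fintype ι] {α : ι → Type*}
    [∀ i, MeasurableSpace (α i)] {μ : ∀ i, Measure (α i)} [∀ i, SigmaFinite (μ i)]
    {F : ∀ i, α i → ℝ} (hF : ∀ i, Integrable (fun x => exp (F i x)) (μ i)) :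
    Integrable (fun X => exp (∑ i, F i (X i))) (Measure.pi μ) := by
  simpa only [exp_sum] using Integrable.fintype_prod_dep hF

theorem integral_exp_sum_pi {ι : Type*} [Fintype ι] {α : ι → Type*}
    [∀ i, MeasurableSpace (α i)] (μ : ∀ i, Measure (α i)) [∀ i, SigmaFinite (μ i)]
    (F : ∀ i, α i → ℝ) :
    ∫ X, exp (∑ i, F i (X i)) ∂Measure.pi μ = ∏ i, ∫ x, exp (F i x) ∂μ i := by
  simpa only [exp_sum] using integral_fintype_prod_eq_prod (𝕜 := ℝ) fun i x => exp (F i x)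

theorem exp_integral_le_integral_exp [IsProbabilityMeasure μ] (hF : Integrable F μ)
    (hexp : Integrable (fun x => exp (F x)) μ) : exp (∫ x, F x ∂μ) ≤ ∫ x, exp (F x) ∂μ :=
  convexOn_exp.map_integral_le continuous_exp.continuousOn isClosed_univ
    (ae_of_all _ fun _ => mem_univ _) hF hexp

theorem exp_le_one_add_add_sq_mul_exp_abs (x : ℝ) : exp x ≤ 1 + x + x ^ 2 * exp |x| := by
  have hnorm := Complex.norm_exp_sub_sum_le_norm_mul_exp (x : ℂ) 2
  have hreal : Complex.exp (x : ℂ) - ∑ m ∈ range 2, (x : ℂ) ^ m / (m.factorial : ℂ)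
      = ((exp x - (1 + x) : ℝ) : ℂ) := by
    simp [Finset.sum_range_succ]
  rw [hreal, Complex.norm_real, Complex.norm_real, norm_eq_abs, norm_eq_abs, sq_abs] at hnorm
  linarith [le_of_abs_le hnorm]

theorem integral_exp_le_exp_integral_sq_mul_exp [IsProbabilityMeasure μ] {h : Ω → ℝ}
    (hh : Integrable h μ) (hh_zero : ∫ x, h x ∂μ = 0) (hF : ∀ x, |h x| ≤ F x)
    (hint : Integrable (fun x => h x ^ 2 * exp (F x)) μ) :
    ∫ x, exp (h x) ∂μ ≤ exp (∫ x, h x ^ 2 * exp (F x) ∂μ) := by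
  have hle : ∀ x, exp (h x) ≤ 1 + h x + h x ^ 2 * exp (F x) := fun x =>
    (exp_le_one_add_add_sq_mul_exp_abs (h x)).trans (by gcongr; exact hF x)
  have hlin : Integrable (fun x => 1 + h x) μ := (integrable_const 1).add hh
  calc ∫ x, exp (h x) ∂μ ≤ ∫ x, (1 + h x + h x ^ 2 * exp (F x)) ∂μ :=
        integral_mono_of_nonneg (ae_of_all _ fun x => (exp_pos (h x)).le) (hlin.add hint)
          (ae_of_all _ hle)
    _ = ∫ x, h x ^ 2 * exp (F x) ∂μ + 1 := by
        rw [integral_add hlin hint, integral_add (integrable_const 1) hh, hh_zero]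
        simp [add_comm]
    _ ≤ exp (∫ x, h x ^ 2 * exp (F x) ∂μ) := add_one_le_exp _

end ExponentialMoments

section SubGaussian

variable {Ω : Type*} [MeasurableSpace Ω] {μ : Measure Ω}

theorem integral_exp_mul_sq_gaussianReal {c : ℝ} {v : ℝ≥0} (hcv : c * v < 1) :
    ∫ x, exp (c * x ^ 2 / 2) ∂gaussianReal 0 v = (√(1 - c * v))⁻¹ := by
  rcases eq_or_ne v 0 with rfl | hv
  · simp
  have : (0 : ℝ) < v := by positivity
  have : 0 < 1 - c * v := by linarith
  have hdensity : ∀ x : ℝ, gaussianPDFReal 0 v x • exp (c * x ^ 2 / 2)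
      = (√(2 * π * v))⁻¹ * exp (-((1 - c * v) / (2 * v)) * x ^ 2) := fun x => by
    rw [gaussianPDFReal, smul_eq_mul, mul_assoc, ← exp_add]
    congr 2
    field_simp
    ring
  simp_rw [integral_gaussianReal_eq_integral_smul hv, hdensity]
  rw [integral_const_mul, integral_gaussian, ← sqrt_inv, ← sqrt_inv, ← sqrt_mul (by positivity)]
  congr 1
  field_simp

-- Gaussian linearisation: `exp (v X² / 2)` is the average of `exp (g X)` over `g ∼ N(0, v)`.
theorem half_mul_sq_mem_expMomentSublevel_of_hasSubgaussianMGF [SFinite μ] {X : Ω → ℝ}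
    {c v : ℝ≥0} (hX : HasSubgaussianMGF X c μ) (hcv : c * v < 1) :
    (fun x => v / 2 * X x ^ 2) ∈ expMomentSublevel μ (√(1 - c * v))⁻¹ := by
  have hcv' : (c : ℝ) * v < 1 := by exact_mod_cast hcv
  have hmgf : ∀ y : ℝ, ∫ g, exp (g * y) ∂gaussianReal 0 v = exp (v / 2 * y ^ 2) := fun y => by
    have := congrFun (mgf_fun_id_gaussianReal (μ := 0) (v := v)) y
    simp only [mgf, zero_mul, zero_add] at this
    simpa only [mul_comm, mul_div_right_comm] using this
  have hgauss : Integrable (fun g => exp (c * g ^ 2 / 2)) (gaussianReal 0 v) := by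
    refine .of_integral_ne_zero ?_
    rw [integral_exp_mul_sq_gaussianReal hcv']
    have : 0 < 1 - (c : ℝ) * v := by linarith
    positivity
  have hprod : Integrable (fun p : Ω × ℝ => exp (p.2 * X p.1)) (μ.prod (gaussianReal 0 v)) := by
    have hmeas : AEMeasurable (fun p : Ω × ℝ => exp (p.2 * X p.1)) (μ.prod (gaussianReal 0 v)) :=
      (measurable_snd.aemeasurable.mul hX.aemeasurable.comp_fst).exp
    refine (integrable_prod_iff' hmeas.aestronglyMeasurable).2
      ⟨ae_of_all _ hX.integrable_exp_mul, ?_⟩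
    simp only [norm_eq_abs, abs_exp]
    refine hgauss.mono' ?_ (ae_of_all _ fun g => ?_)
    · exact hmeas.aestronglyMeasurable.prod_swap.integral_prod_right'
    · rw [norm_of_nonneg (integral_nonneg fun x => (exp_pos _).le)]
      exact hX.mgf_le g
  refine ⟨by simpa only [hmgf] using hprod.integral_prod_left, ?_⟩
  calc ∫ x, exp (v / 2 * X x ^ 2) ∂μ
      = ∫ x, ∫ g, exp (g * X x) ∂gaussianReal 0 v ∂μ := by simp only [hmgf]
    _ = ∫ g, ∫ x, exp (g * X x) ∂μ ∂gaussianReal 0 v := integral_integral_swap hprod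
    _ ≤ ∫ g, exp (c * g ^ 2 / 2) ∂gaussianReal 0 v :=
        integral_mono hprod.integral_prod_right hgauss hX.mgf_le
    _ = (√(1 - c * v))⁻¹ := integral_exp_mul_sq_gaussianReal hcv'

theorem hasSubgaussianMGF_sum_pi {κ : Type*} [Fintype κ] [IsProbabilityMeasure μ] {g : Ω → ℝ}
    (hg : AEMeasurable g μ) (hg_le : ∀ x, |g x| ≤ 1) (hg_zero : ∫ x, g x ∂μ = 0) :
    HasSubgaussianMGF (fun z : κ → Ω => ∑ j, g (z j)) (Fintype.card κ)
      (Measure.pi fun _ => μ) := by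
  have hone : HasSubgaussianMGF g 1 μ := by
    convert hasSubgaussianMGF_of_mem_Icc_of_integral_eq_zero (a := -1) (b := 1) hg
      (ae_of_all _ fun x => abs_le.1 (hg_le x)) hg_zero
    norm_num [← NNReal.coe_inj]
  have heval : ∀ j : κ, HasSubgaussianMGF (fun z : κ → Ω => g (z j)) 1
      (Measure.pi fun _ => μ) := fun j =>
    .of_map (measurable_pi_apply j).aemeasurable (by rwa [(measurePreserving_eval _ j).map_eq])
  simpa using HasSubgaussianMGF.sum_of_iIndepFun (iIndepFun_pi fun _ => hg)
    (s := Finset.univ) fun j _ => heval j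

theorem sum_sq_mem_expMomentSublevel_two {κ : Type*} [Fintype κ] [IsProbabilityMeasure μ]
    {g : Ω → ℝ} (hg : AEMeasurable g μ) (hg_le : ∀ x, |g x| ≤ 1) (hg_zero : ∫ x, g x ∂μ = 0)
    {n : ℕ} (hκ : Fintype.card κ ≤ n) :
    (fun z : κ → Ω => 3 / (8 * n) * (∑ j, g (z j)) ^ 2) ∈
      expMomentSublevel (Measure.pi fun _ => μ) 2 := by
  set v : ℝ≥0 := 3 / (4 * n) with hv
  have hcv : (Fintype.card κ : ℝ≥0) * v ≤ 3 / 4 :=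
    calc (Fintype.card κ : ℝ≥0) * v ≤ n * v := by gcongr
      _ = 3 / 4 * (n / n) := by rw [hv]; ring
      _ ≤ 3 / 4 := mul_le_of_le_one_right' (div_self_le_one _)
  have : (Fintype.card κ : ℝ) * v ≤ 3 / 4 := by exact_mod_cast hcv
  have hmem := half_mul_sq_mem_expMomentSublevel_of_hasSubgaussianMGF
    (hasSubgaussianMGF_sum_pi (κ := κ) hg hg_le hg_zero)
    (hcv.trans_lt (by rw [div_lt_one] <;> norm_num))
  have htwo : (√(1 - (Fintype.card κ : ℝ) * v))⁻¹ ≤ 2 := by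
    rw [inv_le_comm₀ (sqrt_pos.2 (by linarith)) two_pos]
    exact le_sqrt_of_sq_le (by linarith)
  have hvn : (v : ℝ) / 2 = 3 / (8 * n) := by
    rw [hv]; push_cast; ring
  rw [← hvn]
  exact expMomentSublevel_mono htwo hmem

end SubGaussian

section MomentGrowth

variable {Ω : Type*} [MeasurableSpace Ω] {μ : Measure Ω} {f : Ω → ℝ} {A C t : ℝ}

/-- The moments of `f` grow at most linearly with constant `A`, that is `‖f‖_{L^k(μ)} ≤ k A` for
every natural exponent `k`. The case `k = 0` holds for every probability measure, as `0 ^ 0 = 1`. -/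
structure HasLinearMomentGrowth (μ : Measure Ω) (f : Ω → ℝ) (A : ℝ) : Prop where
  integrable_pow : ∀ k : ℕ, Integrable (fun x => |f x| ^ k) μ
  integral_pow_le : ∀ k : ℕ, ∫ x, |f x| ^ k ∂μ ≤ (k * A) ^ k

theorem HasLinearMomentGrowth.nonneg (hf : HasLinearMomentGrowth μ f A) : 0 ≤ A := by
  simpa using (integral_nonneg fun x => by positivity).trans (hf.integral_pow_le 1)

theorem HasLinearMomentGrowth.integral_pow_div_factorial_le (hf : HasLinearMomentGrowth μ f A)
    (ht : 0 ≤ t) (k : ℕ) :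
    ∫ x, (t * |f x|) ^ k / k.factorial ∂μ ≤ (t * exp 1 * A) ^ k := by
  have hA := hf.nonneg
  calc ∫ x, (t * |f x|) ^ k / k.factorial ∂μ
      = t ^ k * (∫ x, |f x| ^ k ∂μ) / k.factorial := by
        simp only [mul_pow, integral_div, integral_const_mul]
    _ ≤ t ^ k * (k * A) ^ k / k.factorial := by gcongr; exact hf.integral_pow_le k
    _ = (t * A) ^ k * ((k : ℝ) ^ k / k.factorial) := by ring
    _ ≤ (t * A) ^ k * exp k := by gcongr; exact pow_div_factorial_le_exp k (by positivity) k
    _ = (t * exp 1 * A) ^ k := by rw [← exp_one_pow k]; ring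

theorem HasLinearMomentGrowth.const_mul_abs_mem_expMomentSublevel [NeZero μ]
    (hf : HasLinearMomentGrowth μ f A) (ht : 0 ≤ t) (htA : t * exp 1 * A < 1) :
    (fun x => t * |f x|) ∈ expMomentSublevel μ (1 - t * exp 1 * A)⁻¹ := by
  have hA := hf.nonneg
  let G : ℕ → Ω → ℝ := fun k x => (t * |f x|) ^ k / k.factorial
  have hG_norm : ∀ k, ∫ x, ‖G k x‖ ∂μ = ∫ x, G k x ∂μ := fun k =>
    integral_congr_ae (ae_of_all _ fun x => norm_of_nonneg (by positivity))
  have hG_int : ∀ k, Integrable (G k) μ := fun k => by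
    simpa only [G, mul_pow] using ((hf.integrable_pow k).const_mul _).div_const _
  have hG_le : ∀ k, ∫ x, G k x ∂μ ≤ (t * exp 1 * A) ^ k :=
    hf.integral_pow_div_factorial_le ht
  have hgeom := hasSum_geometric_of_lt_one (by positivity) htA
  have hsum : HasSum (fun k => ∫ x, G k x ∂μ) (∫ x, exp (t * |f x|) ∂μ) := by
    simpa only [G, exp_eq_exp_ℝ, NormedSpace.exp_eq_tsum_div] using
      hasSum_integral_of_summable_integral_norm hG_int
        (.of_nonneg_of_le (fun k => integral_nonneg fun x => norm_nonneg _)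
          (fun k => (hG_norm k).trans_le (hG_le k)) hgeom.summable)
  refine ⟨.of_integral_ne_zero (ne_of_gt ?_), hasSum_le hG_le hsum hgeom⟩
  calc 0 < ∫ x, G 0 x ∂μ := by
        have : IsFiniteMeasure μ := by simpa [integrable_const_iff] using hf.integrable_pow 0
        simp [G]
    _ ≤ _ := le_hasSum hsum 0 fun k _ => integral_nonneg fun x => by positivity

/-- The constant `sup_{p ≥ 1} (1/p) ‖f‖_{L^p(μ)}` of a nonnegative function `f`. As a real supremum
it is `0` when the set of values is unbounded. -/
def momentGrowthConst (μ : Measure Ω) (f : Ω → ℝ) : ℝ :=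
  ⨆ p ∈ Set.Ici (1 : ℝ), (1 / p) * (∫ x, f x ^ p ∂μ) ^ (1 / p)

theorem one_div_mul_integral_rpow_le [IsProbabilityMeasure μ] (hf : ∀ x, 0 ≤ f x)
    (hfC : ∀ x, f x ≤ C) (hC : 0 ≤ C) {p : ℝ} (hp : 1 ≤ p) :
    (1 / p) * (∫ x, f x ^ p ∂μ) ^ (1 / p) ≤ C := by
  have hp_pos : 0 < p := by linarith
  have hint_nonneg : 0 ≤ ∫ x, f x ^ p ∂μ := integral_nonneg fun x => rpow_nonneg (hf x) p
  have hint : ∫ x, f x ^ p ∂μ ≤ C ^ p := by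
    simpa using integral_mono_of_nonneg (ae_of_all μ fun x => rpow_nonneg (hf x) p)
      (integrable_const (C ^ p)) (ae_of_all _ fun x => rpow_le_rpow (hf x) (hfC x) hp_pos.le)
  calc (1 / p) * (∫ x, f x ^ p ∂μ) ^ (1 / p) ≤ 1 * (C ^ p) ^ (1 / p) := by
        gcongr
        exact (div_le_one hp_pos).2 hp
    _ = C := by rw [one_mul, one_div, rpow_rpow_inv hC hp_pos.ne']

theorem le_momentGrowthConst [IsProbabilityMeasure μ] (hf : ∀ x, 0 ≤ f x)
    (hfC : ∀ x, f x ≤ C) (hC : 0 ≤ C) {p : ℝ} (hp : 1 ≤ p) :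
    (1 / p) * (∫ x, f x ^ p ∂μ) ^ (1 / p) ≤ momentGrowthConst μ f := by
  have hbdd : BddAbove (range fun p : ℝ => ⨆ _ : p ∈ Set.Ici (1 : ℝ),
      (1 / p) * (∫ x, f x ^ p ∂μ) ^ (1 / p)) :=
    ⟨C, forall_mem_range.2 fun q =>
      Real.iSup_le (fun hq => one_div_mul_integral_rpow_le hf hfC hC hq) hC⟩
  simpa only [momentGrowthConst, ciSup_pos (Set.mem_Ici.2 hp)] using le_ciSup hbdd p

theorem hasLinearMomentGrowth_momentGrowthConst [IsProbabilityMeasure μ]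
    (hf_meas : AEMeasurable f μ) (hf : ∀ x, 0 ≤ f x) (hfC : ∀ x, f x ≤ C) :
    HasLinearMomentGrowth μ f (momentGrowthConst μ f) where
  integrable_pow k := by
    refine .of_bound (hf_meas.abs.pow_const k).aestronglyMeasurable (C ^ k)
      (ae_of_all _ fun x => ?_)
    rw [norm_pow, norm_eq_abs, abs_abs, abs_of_nonneg (hf x)]
    exact pow_le_pow_left₀ (hf x) (hfC x) k
  integral_pow_le k := by
    rcases eq_or_ne k 0 with rfl | hk
    · simp
    obtain ⟨x₀⟩ := nonempty_of_isProbabilityMeasure μ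
    have hk_one : (1 : ℝ) ≤ k := by exact_mod_cast Nat.one_le_iff_ne_zero.2 hk
    have hint_nonneg : 0 ≤ ∫ x, f x ^ k ∂μ := integral_nonneg fun x => pow_nonneg (hf x) k
    have hnorm : (∫ x, f x ^ k ∂μ) ^ (k : ℝ)⁻¹ ≤ k * momentGrowthConst μ f := by
      have hle := le_momentGrowthConst (μ := μ) hf hfC ((hf x₀).trans (hfC x₀)) hk_one
      simp only [rpow_natCast, one_div] at hle
      rwa [inv_mul_le_iff₀ (by positivity)] at hle
    simp only [abs_of_nonneg (hf _)]
    calc ∫ x, f x ^ k ∂μ = ((∫ x, f x ^ k ∂μ) ^ (k : ℝ)⁻¹) ^ k :=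
          (rpow_inv_natCast_pow hint_nonneg hk).symm
      _ ≤ (k * momentGrowthConst μ f) ^ k := by gcongr

end MomentGrowth

theorem integrable_continuous_comp_of_abs_le {Ω : Type*} [MeasurableSpace Ω] {μ : Measure Ω}
    [IsFiniteMeasure μ] {f : Ω → ℝ} {M : ℝ} (hf : AEStronglyMeasurable f μ)
    (hf_le : ∀ x, |f x| ≤ M) {g : ℝ → ℝ} (hg : Continuous g) :
    Integrable (fun x => g (f x)) μ := by
  obtain ⟨C, hC⟩ := (isCompact_Icc (a := -M) (b := M)).exists_bound_of_continuousOn hg.continuousOn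
  exact .of_bound (hg.comp_aestronglyMeasurable hf) C
    (ae_of_all _ fun x => hC _ (abs_le.1 (hf_le x)))

section CancellingKernel

variable {Ω ι κ : Type*} [MeasurableSpace Ω] {μ : Measure Ω} {ψ : Ω → Ω → ℝ} {F : Ω → ℝ}
  [Fintype ι] [Fintype κ] {n : ℕ}

/-- A measurable kernel `ψ` centred in each of its two variables and dominated by a function `F` of
the first one, which plays the role of `sup_z |ψ(·, z)|`. -/
structure IsCancellingKernel (μ : Measure Ω) (ψ : Ω → Ω → ℝ) (F : Ω → ℝ) : Prop where
  measurable : Measurable (Function.uncurry ψ)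
  measurable_bound : Measurable F
  abs_le : ∀ x z, |ψ x z| ≤ F x
  integral_left : ∀ z, ∫ x, ψ x z ∂μ = 0
  integral_right : ∀ x, ∫ z, ψ x z ∂μ = 0

namespace IsCancellingKernel

theorem bound_nonneg (hψ : IsCancellingKernel μ ψ F) (x : Ω) : 0 ≤ F x :=
  (abs_nonneg _).trans (hψ.abs_le x x)

theorem const_mul (hψ : IsCancellingKernel μ ψ F) {c : ℝ} (hc : 0 ≤ c) :
    IsCancellingKernel μ (fun x z => c * ψ x z) (fun x => c * F x) where
  measurable := hψ.measurable.const_mul c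
  measurable_bound := hψ.measurable_bound.const_mul c
  abs_le x z := by
    rw [abs_mul, abs_of_nonneg hc]
    exact mul_le_mul_of_nonneg_left (hψ.abs_le x z) hc
  integral_left z := by rw [integral_const_mul, hψ.integral_left, mul_zero]
  integral_right x := by rw [integral_const_mul, hψ.integral_right, mul_zero]

theorem integrable_left (hψ : IsCancellingKernel μ ψ F) (hF : Integrable F μ) (z : Ω) :
    Integrable (fun x => ψ x z) μ :=
  hF.mono' (hψ.measurable.comp measurable_prodMk_right).aestronglyMeasurable
    (ae_of_all _ fun x => hψ.abs_le x z)

theorem measurable_sum (hψ : IsCancellingKernel μ ψ F) (z : κ → Ω) :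
    Measurable fun x => ∑ j, ψ x (z j) :=
  Finset.measurable_sum _ fun _ _ => hψ.measurable.comp measurable_prodMk_right

theorem abs_inv_mul_sum_le (hψ : IsCancellingKernel μ ψ F) (hκ : Fintype.card κ ≤ n)
    (z : κ → Ω) (x : Ω) : |(n : ℝ)⁻¹ * ∑ j, ψ x (z j)| ≤ F x :=
  calc |(n : ℝ)⁻¹ * ∑ j, ψ x (z j)| = (n : ℝ)⁻¹ * |∑ j, ψ x (z j)| := by
        rw [abs_mul, abs_of_nonneg (by positivity)]
    _ ≤ (n : ℝ)⁻¹ * ∑ _j : κ, F x := by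
        gcongr
        exact (abs_sum_le_sum_abs _ _).trans (sum_le_sum fun j _ => hψ.abs_le x (z j))
    _ = (n : ℝ)⁻¹ * Fintype.card κ * F x := by simp [mul_assoc]
    _ ≤ F x := mul_le_of_le_one_left (hψ.bound_nonneg x)
        (inv_mul_le_one_of_le₀ (by exact_mod_cast hκ) n.cast_nonneg)

theorem integrable_exp_bipartite [IsFiniteMeasure μ] (hψ : IsCancellingKernel μ ψ F)
    (hF : Integrable (fun x => exp (F x)) μ) (hκ : Fintype.card κ ≤ n) :
    Integrable (fun p : (ι → Ω) × (κ → Ω) => exp ((n : ℝ)⁻¹ * ∑ i, ∑ j, ψ (p.1 i) (p.2 j)))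
      ((Measure.pi fun _ => μ).prod (Measure.pi fun _ => μ)) := by
  have hmeas : Measurable
      fun p : (ι → Ω) × (κ → Ω) => exp ((n : ℝ)⁻¹ * ∑ i, ∑ j, ψ (p.1 i) (p.2 j)) :=
    ((Finset.measurable_sum _ fun i _ => Finset.measurable_sum _ fun j _ => hψ.measurable.comp
      (((measurable_pi_apply i).comp measurable_fst).prodMk
        ((measurable_pi_apply j).comp measurable_snd))).const_mul _).exp
  refine (Integrable.comp_fst (integrable_exp_sum_pi fun _ => hF) _).mono'
    hmeas.aestronglyMeasurable (ae_of_all _ fun p => ?_)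
  rw [norm_eq_abs, abs_exp, mul_sum]
  gcongr with i
  exact (le_abs_self _).trans (hψ.abs_inv_mul_sum_le hκ p.2 (p.1 i))

theorem integral_exp_inv_mul_sum_le [IsProbabilityMeasure μ] (hψ : IsCancellingKernel μ ψ F)
    (hF : Integrable (fun x => exp (7 * F x)) μ) (hκ : Fintype.card κ ≤ n) (z : κ → Ω) :
    ∫ x, exp ((n : ℝ)⁻¹ * ∑ j, ψ x (z j)) ∂μ ≤
      exp (((n : ℝ)⁻¹) ^ 2 * ∫ x, (∑ j, ψ x (z j)) ^ 2 * exp (F x) ∂μ) := by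
  set h : Ω → ℝ := fun x => (n : ℝ)⁻¹ * ∑ j, ψ x (z j) with h_def
  have hh_le : ∀ x, |h x| ≤ F x := hψ.abs_inv_mul_sum_le hκ z
  have hh_meas : Measurable h := (hψ.measurable_sum z).const_mul _
  have hF_le : ∀ x, F x ≤ exp (F x) := fun x => (lt_add_one _).le.trans (add_one_le_exp _)
  have hF_int : Integrable F μ :=
    hF.mono' hψ.measurable_bound.aestronglyMeasurable (ae_of_all _ fun x => by
      have hFx := hψ.bound_nonneg x
      rw [norm_of_nonneg hFx]
      exact (hF_le x).trans (exp_le_exp.2 (by linarith)))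
  have hh_int : Integrable h μ := hF_int.mono' hh_meas.aestronglyMeasurable (ae_of_all _ hh_le)
  have hh_zero : ∫ x, h x ∂μ = 0 := by
    rw [integral_const_mul, integral_finsetSum _ fun j _ => hψ.integrable_left hF_int (z j)]
    simp [hψ.integral_left]
  have hh_sq_int : Integrable (fun x => h x ^ 2 * exp (F x)) μ := by
    refine hF.mono' (hh_meas.pow_const 2 |>.mul hψ.measurable_bound.exp).aestronglyMeasurable
      (ae_of_all _ fun x => ?_)
    have := hψ.bound_nonneg x
    calc ‖h x ^ 2 * exp (F x)‖ = |h x| ^ 2 * exp (F x) := by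
          rw [norm_of_nonneg (by positivity), sq_abs]
      _ ≤ exp (F x) ^ 2 * exp (F x) := by gcongr; exact (hh_le x).trans (hF_le x)
      _ = exp (3 * F x) := by rw [← pow_succ, ← exp_nat_mul]; norm_num
      _ ≤ exp (7 * F x) := exp_le_exp.2 (by linarith)
  calc ∫ x, exp (h x) ∂μ ≤ exp (∫ x, h x ^ 2 * exp (F x) ∂μ) :=
        integral_exp_le_exp_integral_sq_mul_exp hh_int hh_zero hh_le hh_sq_int
    _ = _ := by simp only [h_def, mul_pow, mul_assoc, integral_const_mul]

theorem integral_exp_bipartite_le_exp_integral [IsProbabilityMeasure μ]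
    (hψ : IsCancellingKernel μ ψ F) (hF : Integrable (fun x => exp (7 * F x)) μ)
    (hι : Fintype.card ι ≤ n) (hκ : Fintype.card κ ≤ n) (z : κ → Ω) :
    ∫ Y : ι → Ω, exp ((n : ℝ)⁻¹ * ∑ i, ∑ j, ψ (Y i) (z j)) ∂Measure.pi (fun _ => μ) ≤
      exp ((n : ℝ)⁻¹ * ∫ x, (∑ j, ψ x (z j)) ^ 2 * exp (F x) ∂μ) := by
  set I := ∫ x, (∑ j, ψ x (z j)) ^ 2 * exp (F x) ∂μ
  have : 0 ≤ I := integral_nonneg fun x => by positivity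
  calc ∫ Y : ι → Ω, exp ((n : ℝ)⁻¹ * ∑ i, ∑ j, ψ (Y i) (z j)) ∂Measure.pi (fun _ => μ)
      = (∫ x, exp ((n : ℝ)⁻¹ * ∑ j, ψ x (z j)) ∂μ) ^ Fintype.card ι := by
        simp_rw [mul_sum (s := (univ : Finset ι)), integral_exp_sum_pi (fun _ => μ)
          fun _ x => (n : ℝ)⁻¹ * ∑ j, ψ x (z j)]
        simp
    _ ≤ exp (((n : ℝ)⁻¹) ^ 2 * I) ^ Fintype.card ι :=
        pow_le_pow_left₀ (integral_nonneg fun x => (exp_pos _).le)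
          (hψ.integral_exp_inv_mul_sum_le hF hκ z) _
    _ ≤ exp (((n : ℝ)⁻¹) ^ 2 * I) ^ n :=
        pow_le_pow_right₀ (one_le_exp (by positivity)) hι
    _ = exp ((n : ℝ)⁻¹ * I) := by
        rw [← exp_nat_mul, ← mul_assoc]
        congr 2
        rw [sq, mul_left_comm, ← mul_assoc]
        simpa using mul_inv_mul_cancel (n : ℝ)⁻¹

end IsCancellingKernel

/-- The kernel `ψ` damped in its first variable by `3 exp (-3 F)`, so as to be bounded by `1` when
`|ψ x z| ≤ F x`. The weight `exp F` becomes `exp (7 F)` when `ψ ^ 2` is replaced by its damping. -/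
def dampedKernel (ψ : Ω → Ω → ℝ) (F : Ω → ℝ) (x z : Ω) : ℝ :=
  3 * exp (-3 * F x) * ψ x z

theorem measurable_dampedKernel (hψ : IsCancellingKernel μ ψ F) :
    Measurable (Function.uncurry (dampedKernel ψ F)) :=
  ((hψ.measurable_bound.comp measurable_fst).const_mul _).exp.const_mul 3 |>.mul hψ.measurable

theorem abs_dampedKernel_le_one (hψ : IsCancellingKernel μ ψ F) (x z : Ω) :
    |dampedKernel ψ F x z| ≤ 1 := by
  have hF : 3 * F x ≤ exp (3 * F x) := (lt_add_one _).le.trans (add_one_le_exp _)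
  calc |dampedKernel ψ F x z| = 3 * |ψ x z| / exp (3 * F x) := by
        rw [dampedKernel, abs_mul, abs_of_pos (by positivity), neg_mul, exp_neg]
        ring
    _ ≤ exp (3 * F x) / exp (3 * F x) := by
        gcongr
        exact (mul_le_mul_of_nonneg_left (hψ.abs_le x z) (by norm_num)).trans hF
    _ = 1 := div_self (exp_pos _).ne'

theorem integral_dampedKernel (hψ : IsCancellingKernel μ ψ F) (x : Ω) :
    ∫ z, dampedKernel ψ F x z ∂μ = 0 := by
  simp only [dampedKernel, integral_const_mul, hψ.integral_right, mul_zero]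

theorem integral_sq_sum_mul_exp_eq_integral_tilted [NeZero μ]
    (hF : Integrable (fun x => exp (7 * F x)) μ) (z : κ → Ω) :
    ∫ x, (∑ j, ψ x (z j)) ^ 2 * exp (F x) ∂μ =
      (∫ x, exp (7 * F x) ∂μ) / 9 *
        ∫ x, (∑ j, dampedKernel ψ F x (z j)) ^ 2 ∂μ.tilted fun x => 7 * F x := by
  have hZ : ∫ x, exp (7 * F x) ∂μ ≠ 0 := (integral_exp_pos hF).ne'
  rw [integral_tilted, ← integral_const_mul]
  congr 1 with x
  have hexp : exp (7 * F x) * exp (-3 * F x) ^ 2 = exp (F x) := by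
    rw [← exp_nat_mul, ← exp_add]
    ring_nf
  simp only [dampedKernel, ← mul_sum, smul_eq_mul, ← hexp]
  field_simp
  norm_num

theorem measurable_sum_dampedKernel (hψ : IsCancellingKernel μ ψ F) :
    Measurable fun p : Ω × (κ → Ω) => ∑ j, dampedKernel ψ F p.1 (p.2 j) :=
  Finset.measurable_sum _ fun j _ => (measurable_dampedKernel hψ).comp
    (measurable_fst.prodMk ((measurable_pi_apply j).comp measurable_snd))

theorem abs_sum_dampedKernel_le (hψ : IsCancellingKernel μ ψ F) (x : Ω) (z : κ → Ω) :
    |∑ j, dampedKernel ψ F x (z j)| ≤ Fintype.card κ := by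
  simpa using (abs_sum_le_sum_abs _ _).trans
    (sum_le_card_nsmul univ _ 1 fun j _ => abs_dampedKernel_le_one hψ x (z j))

variable [IsProbabilityMeasure μ]

namespace IsCancellingKernel

theorem integral_exp_bipartite_le_integral_tilted (hψ : IsCancellingKernel μ ψ F)
    (hF : (fun x => 7 * F x) ∈ expMomentSublevel μ 2) (hι : Fintype.card ι ≤ n)
    (hκ : Fintype.card κ ≤ n) (z : κ → Ω) :
    ∫ Y : ι → Ω, exp ((n : ℝ)⁻¹ * ∑ i, ∑ j, ψ (Y i) (z j)) ∂Measure.pi (fun _ => μ) ≤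
      ∫ x, exp (3 / (8 * n) * (∑ j, dampedKernel ψ F x (z j)) ^ 2)
        ∂μ.tilted fun x => 7 * F x := by
  set ν := μ.tilted fun x => 7 * F x
  set S : Ω → ℝ := fun x => ∑ j, dampedKernel ψ F x (z j)
  have : IsProbabilityMeasure ν := isProbabilityMeasure_tilted hF.1
  have hS_comp : ∀ g : ℝ → ℝ, Continuous g → Integrable (fun x => g (S x)) ν := fun g =>
    integrable_continuous_comp_of_abs_le
      ((measurable_sum_dampedKernel hψ).comp measurable_prodMk_right).aestronglyMeasurable
      fun x => abs_sum_dampedKernel_le hψ x z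
  have hS_nonneg : 0 ≤ ∫ x, S x ^ 2 ∂ν := integral_nonneg fun x => sq_nonneg (S x)
  calc ∫ Y : ι → Ω, exp ((n : ℝ)⁻¹ * ∑ i, ∑ j, ψ (Y i) (z j)) ∂Measure.pi (fun _ => μ)
      ≤ exp ((n : ℝ)⁻¹ * ∫ x, (∑ j, ψ x (z j)) ^ 2 * exp (F x) ∂μ) :=
        hψ.integral_exp_bipartite_le_exp_integral hF.1 hι hκ z
    _ = exp ((n : ℝ)⁻¹ * ((∫ x, exp (7 * F x) ∂μ) / 9 * ∫ x, S x ^ 2 ∂ν)) := by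
        rw [integral_sq_sum_mul_exp_eq_integral_tilted hF.1]
    _ ≤ exp ((n : ℝ)⁻¹ * (3 / 8 * ∫ x, S x ^ 2 ∂ν)) := by
        refine exp_le_exp.2 (mul_le_mul_of_nonneg_left
          (mul_le_mul_of_nonneg_right ?_ hS_nonneg) (by positivity))
        linarith [hF.2]
    _ = exp (∫ x, 3 / (8 * n) * S x ^ 2 ∂ν) := by
        rw [integral_const_mul]
        ring_nf
    _ ≤ ∫ x, exp (3 / (8 * n) * S x ^ 2) ∂ν :=
        exp_integral_le_integral_exp (hS_comp (fun s => 3 / (8 * n) * s ^ 2) (by fun_prop))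
          (hS_comp (fun s => exp (3 / (8 * n) * s ^ 2)) (by fun_prop))

theorem bipartite_mem_expMomentSublevel_two (hψ : IsCancellingKernel μ ψ F)
    (hF : (fun x => 7 * F x) ∈ expMomentSublevel μ 2) (hι : Fintype.card ι ≤ n)
    (hκ : Fintype.card κ ≤ n) :
    (fun p : (ι → Ω) × (κ → Ω) => (n : ℝ)⁻¹ * ∑ i, ∑ j, ψ (p.1 i) (p.2 j)) ∈
      expMomentSublevel ((Measure.pi fun _ => μ).prod (Measure.pi fun _ => μ)) 2 := by
  set ν := μ.tilted fun x => 7 * F x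
  have : IsProbabilityMeasure ν := isProbabilityMeasure_tilted hF.1
  have hF_mem : F ∈ expMomentSublevel μ 2 :=
    mem_expMomentSublevel_of_le hF hψ.measurable_bound.aemeasurable fun x => by
      linarith [hψ.bound_nonneg x]
  have hbip := hψ.integrable_exp_bipartite (ι := ι) hF_mem.1 hκ
  have hdamped : Integrable
      (fun p : Ω × (κ → Ω) => exp (3 / (8 * n) * (∑ j, dampedKernel ψ F p.1 (p.2 j)) ^ 2))
      (ν.prod (Measure.pi fun _ => μ)) :=
    integrable_continuous_comp_of_abs_le (g := fun s => exp (3 / (8 * n) * s ^ 2))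
      (measurable_sum_dampedKernel hψ).aestronglyMeasurable
      (fun p => abs_sum_dampedKernel_le hψ p.1 p.2) (by fun_prop)
  have hdamped_le : ∀ x, ∫ z : κ → Ω, exp (3 / (8 * n) * (∑ j, dampedKernel ψ F x (z j)) ^ 2)
      ∂Measure.pi (fun _ => μ) ≤ 2 := fun x =>
    (sum_sq_mem_expMomentSublevel_two
      ((measurable_dampedKernel hψ).comp measurable_prodMk_left).aemeasurable
      (abs_dampedKernel_le_one hψ x) (integral_dampedKernel hψ x) hκ).2
  refine ⟨hbip, ?_⟩
  calc ∫ p, exp ((n : ℝ)⁻¹ * ∑ i, ∑ j, ψ (p.1 i) (p.2 j))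
        ∂(Measure.pi fun _ : ι => μ).prod (Measure.pi fun _ : κ => μ)
      = ∫ z : κ → Ω, ∫ Y : ι → Ω, exp ((n : ℝ)⁻¹ * ∑ i, ∑ j, ψ (Y i) (z j))
          ∂Measure.pi (fun _ => μ) ∂Measure.pi (fun _ => μ) := integral_prod_symm _ hbip
    _ ≤ ∫ z : κ → Ω, ∫ x, exp (3 / (8 * n) * (∑ j, dampedKernel ψ F x (z j)) ^ 2) ∂ν
          ∂Measure.pi (fun _ => μ) :=
        integral_mono hbip.integral_prod_right hdamped.integral_prod_right
          (hψ.integral_exp_bipartite_le_integral_tilted hF hι hκ)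
    _ = ∫ x, ∫ z : κ → Ω, exp (3 / (8 * n) * (∑ j, dampedKernel ψ F x (z j)) ^ 2)
          ∂Measure.pi (fun _ => μ) ∂ν := (integral_integral_swap hdamped).symm
    _ ≤ ∫ _, 2 ∂ν := integral_mono hdamped.integral_prod_left (integrable_const 2) hdamped_le
    _ = 2 := by simp

end IsCancellingKernel

end CancellingKernel

section Decoupling

variable {ι : Type*} [Fintype ι] [DecidableEq ι]

theorem four_mul_card_filter_mem_notMem {i j : ι} (hij : i ≠ j) :
    4 * #{s : Finset ι | i ∈ s ∧ j ∉ s} = 2 ^ Fintype.card ι := by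
  have hIcc : ({s : Finset ι | i ∈ s ∧ j ∉ s} : Finset (Finset ι)) = Finset.Icc {i} {j}ᶜ := by
    ext s
    simp
  have hcard : Fintype.card ι - 1 - 1 + 2 = Fintype.card ι := by
    have : 1 < Fintype.card ι := Fintype.one_lt_card_iff.2 ⟨i, j, hij⟩
    omega
  rw [hIcc, card_Icc_finset (by simpa using hij.symm), card_compl, Finset.card_singleton,
    Finset.card_singleton]
  conv_rhs => rw [← hcard, pow_add, mul_comm]
  norm_num

-- A quarter of the subsets `s` separate a given pair `i ≠ j`, in the sense `i ∈ s` and `j ∉ s`.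
theorem four_mul_sum_finset_sum_sum_compl (a : ι → ι → ℝ) :
    4 * ∑ s : Finset ι, ∑ i ∈ s, ∑ j ∈ sᶜ, a i j =
      2 ^ Fintype.card ι * (∑ i, ∑ j, a i j - ∑ i, a i i) := by
  have hpair : ∀ i j, 4 * ∑ s : Finset ι, (if i ∈ s ∧ j ∉ s then a i j else 0) =
      2 ^ Fintype.card ι * (a i j - if i = j then a i j else 0) := fun i j => by
    rw [← sum_filter, sum_const, nsmul_eq_mul, ← mul_assoc]
    rcases eq_or_ne i j with rfl | hij
    · simp
    · rw [if_neg hij, sub_zero]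
      exact_mod_cast congrArg (· * a i j)
        (congrArg (Nat.cast (R := ℝ)) (four_mul_card_filter_mem_notMem hij))
  calc 4 * ∑ s : Finset ι, ∑ i ∈ s, ∑ j ∈ sᶜ, a i j
      = 4 * ∑ s : Finset ι, ∑ i, ∑ j, (if i ∈ s ∧ j ∉ s then a i j else 0) := by
        simp only [ite_and, ← Finset.mem_compl, sum_ite_irrel, sum_const_zero, sum_ite_mem,
          Finset.univ_inter]
    _ = ∑ i, ∑ j, 4 * ∑ s : Finset ι, (if i ∈ s ∧ j ∉ s then a i j else 0) := by
        simp only [mul_sum]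
        rw [sum_comm]
        exact sum_congr rfl fun i _ => sum_comm
    _ = 2 ^ Fintype.card ι * (∑ i, ∑ j, a i j - ∑ i, a i i) := by
        simp [hpair, ← mul_sum]

end Decoupling

section Assembly

variable {Ω ι : Type*} [MeasurableSpace Ω] {μ : Measure Ω} [IsProbabilityMeasure μ] [Fintype ι]
  {φ : Ω → Ω → ℝ} {f : Ω → ℝ} {A : ℝ}

namespace IsCancellingKernel

theorem sum_sum_compl_mem_expMomentSublevel_two [DecidableEq ι] (hφ : IsCancellingKernel μ φ f)
    (hf : (fun x => 7 * f x) ∈ expMomentSublevel μ 2) (s : Finset ι) :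
    (fun X : ι → Ω => (Fintype.card ι : ℝ)⁻¹ * ∑ i ∈ s, ∑ j ∈ sᶜ, φ (X i) (X j)) ∈
      expMomentSublevel (Measure.pi fun _ => μ) 2 := by
  have hsum : ∀ X : ι → Ω, ∑ i ∈ s, ∑ j ∈ sᶜ, φ (X i) (X j) =
      ∑ i : {i // i ∈ s}, ∑ j : {j // j ∉ s}, φ (X i) (X j) := fun X => by
    simp_rw [sum_subtype sᶜ (fun _ => Finset.mem_compl), sum_subtype s fun _ => Iff.rfl]
  simp only [hsum]
  have hbip := hφ.bipartite_mem_expMomentSublevel_two (ι := {i // i ∈ s}) (κ := {j // j ∉ s}) hf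
    (Fintype.card_subtype_le _) (Fintype.card_subtype_le _)
  have hsplit : MeasurePreserving (MeasurableEquiv.piEquivPiSubtypeProd (fun _ : ι => Ω) (· ∈ s))
      (Measure.pi fun _ => μ) ((Measure.pi fun _ => μ).prod (Measure.pi fun _ => μ)) := by
    convert measurePreserving_piEquivPiSubtypeProd (fun _ => μ) (· ∈ s)
  exact (comp_mem_expMomentSublevel hsplit hbip :)

theorem offDiag_mem_expMomentSublevel_two (hφ : IsCancellingKernel μ φ f)
    (hf : (fun x => 56 * f x) ∈ expMomentSublevel μ 2) :
    (fun X : ι → Ω => 2 * (Fintype.card ι : ℝ)⁻¹ *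
        (∑ i, ∑ j, φ (X i) (X j) - ∑ i, φ (X i) (X i))) ∈
      expMomentSublevel (Measure.pi fun _ => μ) 2 := by
  classical
  have hf' : (fun x => 7 * (8 * f x)) ∈ expMomentSublevel μ 2 := by
    simpa only [← mul_assoc, show (7 * 8 : ℝ) = 56 by norm_num] using hf
  convert inv_card_mul_sum_mem_expMomentSublevel fun s : Finset ι =>
    (hφ.const_mul (c := 8) (by norm_num)).sum_sum_compl_mem_expMomentSublevel_two hf' s
    using 2 with X
  have hdec := four_mul_sum_finset_sum_sum_compl fun i j => φ (X i) (X j)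
  rw [Fintype.card_finset, Nat.cast_pow, Nat.cast_ofNat, eq_inv_mul_iff_mul_eq₀ (by positivity)]
  simp only [← mul_sum]
  linear_combination -2 * (Fintype.card ι : ℝ)⁻¹ * hdec

theorem diag_mem_expMomentSublevel_two [Nonempty ι] (hφ : IsCancellingKernel μ φ f)
    (hf : (fun x => 56 * f x) ∈ expMomentSublevel μ 2) :
    (fun X : ι → Ω => 2 * (Fintype.card ι : ℝ)⁻¹ * ∑ i, φ (X i) (X i)) ∈
      expMomentSublevel (Measure.pi fun _ => μ) 2 := by
  have hdiag : (fun x => 2 * φ x x) ∈ expMomentSublevel μ 2 :=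
    mem_expMomentSublevel_of_le hf
      ((hφ.measurable.comp (measurable_id.prodMk measurable_id)).const_mul 2).aemeasurable
      fun x => by linarith [le_of_abs_le (hφ.abs_le x x), hφ.bound_nonneg x]
  convert inv_card_mul_sum_mem_expMomentSublevel fun i =>
    comp_mem_expMomentSublevel (measurePreserving_eval (fun _ : ι => μ) i) hdiag
    using 2 with X
  simp only [Function.comp_apply, Function.eval, ← mul_sum]
  ring

theorem mean_mem_expMomentSublevel_two (hφ : IsCancellingKernel μ φ f)
    (hf : (fun x => 56 * f x) ∈ expMomentSublevel μ 2) :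
    (fun X : ι → Ω => (Fintype.card ι : ℝ)⁻¹ * ∑ i, ∑ j, φ (X i) (X j)) ∈
      expMomentSublevel (Measure.pi fun _ => μ) 2 := by
  cases isEmpty_or_nonempty ι
  · simp [expMomentSublevel]
  convert convex_expMomentSublevel (hφ.offDiag_mem_expMomentSublevel_two (ι := ι) hf)
    (hφ.diag_mem_expMomentSublevel_two hf) (by norm_num) (by norm_num) (add_halves 1) with X
  simp only [Pi.add_apply, Pi.smul_apply, smul_eq_mul]
  ring

end IsCancellingKernel

theorem jabin_wang_exponential_bound_B_general (hφ : IsCancellingKernel μ φ f)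
    (hf : HasLinearMomentGrowth μ f A) (hA : 112 * exp 1 * A ≤ 1) :
    Integrable (fun X : ι → Ω => exp (1 / (Fintype.card ι : ℝ) * ∑ i, ∑ j, φ (X i) (X j)))
        (Measure.pi fun _ => μ) ∧
      ∫ X : ι → Ω, exp (1 / (Fintype.card ι : ℝ) * ∑ i, ∑ j, φ (X i) (X j))
        ∂(Measure.pi fun _ => μ) ≤ 2 := by
  have hmem := hf.const_mul_abs_mem_expMomentSublevel (t := 56) (by norm_num) (by linarith)
  simp only [abs_of_nonneg (hφ.bound_nonneg _)] at hmem
  have htwo : (1 - 56 * exp 1 * A)⁻¹ ≤ 2 := by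
    rw [inv_le_comm₀ (by linarith) two_pos]
    linarith
  simp only [one_div]
  exact hφ.mean_mem_expMomentSublevel_two (expMomentSublevel_mono htwo hmem)

end Assembly

section Torus

variable {d : ℕ} {μ : Measure (Torus d)} {φ : Torus d → Torus d → ℝ} {C : ℝ}

theorem supSecond_nonneg (φ : Torus d → Torus d → ℝ) (x : Torus d) : 0 ≤ supSecond φ x :=
  Real.iSup_nonneg fun z => abs_nonneg (φ x z)

theorem supSecond_le (hφ : ∀ x z, |φ x z| ≤ C) (x : Torus d) : supSecond φ x ≤ C :=
  ciSup_le (hφ x)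

theorem abs_le_supSecond (hφ : ∀ x z, |φ x z| ≤ C) (x z : Torus d) : |φ x z| ≤ supSecond φ x :=
  le_ciSup ⟨C, forall_mem_range.2 (hφ x)⟩ z

theorem gammaConst_nonneg (μ : Measure (Torus d)) (φ : Torus d → Torus d → ℝ) :
    0 ≤ gammaConst μ φ := by
  unfold gammaConst
  positivity

theorem mul_momentGrowthConst_supSecond_le_one (hγ : gammaConst μ φ < 1) :
    112 * exp 1 * momentGrowthConst μ (supSecond φ) ≤ 1 := by
  have hsq : (1600 * momentGrowthConst μ (supSecond φ)) ^ 2 ≤ 1 := by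
    have : 0 ≤ 36 * exp 4 * momentGrowthConst μ (supSecond φ) ^ 2 := by positivity
    change (1600 ^ 2 + 36 * exp 4) * momentGrowthConst μ (supSecond φ) ^ 2 < 1 at hγ
    linarith
  have hA := le_of_abs_le ((sq_le_one_iff_abs_le_one _).1 hsq)
  nlinarith [exp_one_lt_d9, exp_pos 1]

end Torus

/-- Jabin–Wang large deviation bound, Theorem `borner_B`:
for a probability measure `μ` on `T^d` and a bounded measurable kernel `φ` with the
cancellations `∫ φ(x,z) μ(dx) = 0 = ∫ φ(z,x) μ(dx)` for all `z`, if `γ < 1` then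
`∫ exp((1/N) Σ_{i,j} φ(x_i,x_j)) dμ^{⊗N} ≤ 2/(1−γ)`. -/
theorem jabin_wang_exponential_bound_B (d : ℕ)
    (μ : Measure (Torus d)) [IsProbabilityMeasure μ]
    (φ : Torus d → Torus d → ℝ)
    (hφ_meas : Measurable (Function.uncurry φ))
    (hφ_bdd : ∃ C, ∀ x z : Torus d, |φ x z| ≤ C)
    (hsup_meas : Measurable (supSecond φ))
    (hcanc₁ : ∀ z : Torus d, ∫ x, φ x z ∂μ = 0)
    (hcanc₂ : ∀ z : Torus d, ∫ x, φ z x ∂μ = 0)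
    (hγ : gammaConst μ φ < 1)
    (N : ℕ) :
    (∫ X : Fin N → Torus d,
        Real.exp ((1 / (N : ℝ)) * ∑ i : Fin N, ∑ j : Fin N, φ (X i) (X j))
        ∂(Measure.pi fun _ : Fin N => μ))
      ≤ 2 / (1 - gammaConst μ φ) := by
  obtain ⟨C, hC⟩ := hφ_bdd
  have hφ : IsCancellingKernel μ φ (supSecond φ) :=
    ⟨hφ_meas, hsup_meas, abs_le_supSecond hC, hcanc₁, hcanc₂⟩
  have hgrowth := hasLinearMomentGrowth_momentGrowthConst (μ := μ) hsup_meas.aemeasurable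
    (supSecond_nonneg φ) (supSecond_le hC)
  have htwo : 2 ≤ 2 / (1 - gammaConst μ φ) :=
    le_div_self two_pos.le (by linarith) (by linarith [gammaConst_nonneg μ φ])
  simpa using (jabin_wang_exponential_bound_B_general (ι := Fin N) hφ hgrowth
    (mul_momentGrowthConst_supSecond_le_one hγ)).2.trans htwo

end
end
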